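/- arXiv:2101.04089 — 2 statements merged into one kernel-verified Lean document; each statement's English description precedes it below -/
import Mathlib

section
/- Three-balls inequality with explicit frequency dependence (Lemma 2.3, interior version, classical formulation): Let n ≥ 2 and let Ω ⊂ ℝⁿ be a bounded open set. Let κ > 1; let q : Ω → ℝ be C¹ with κ⁻¹ < q < κ and with ‖q‖_{C¹(Ω)} ≤ Q, and let V : Ω → ℝ be measurable with |V| ≤ V₀. Then there exist α ∈ (0,1) and C > 1, depending only on Ω, V₀, κ and Q, such that for every k ≥ 1, every C² function u : Ω → ℝ satisfying Δu + k²qu + Vu = 0 on Ω, and every x₀ ∈ Ω and r > 0 with the closed ball B_{4r}(x₀) ⊂ Ω, one has ‖u‖_{L²(B_r(x₀))} ≤ C e^{Ck} ‖u‖_{L²(B_{2r}(x₀))}^{1-α} ‖u‖_{L²(B_{r/2}(x₀))}^{α}. -/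
open MeasureTheory Real
open scoped InnerProductSpace

/-- The `j`-th partial derivative of `u : ℝⁿ → ℝ`. -/
noncomputable def pderiv' {n : ℕ} (j : Fin n) (u : EuclideanSpace ℝ (Fin n) → ℝ)
    (x : EuclideanSpace ℝ (Fin n)) : ℝ :=
  fderiv ℝ u x (EuclideanSpace.single j 1)

/-- The Laplacian of `u : ℝⁿ → ℝ`, as the sum of the second partial derivatives. -/
noncomputable def lap {n : ℕ} (u : EuclideanSpace ℝ (Fin n) → ℝ)
    (x : EuclideanSpace ℝ (Fin n)) : ℝ :=
  ∑ j : Fin n, pderiv' j (pderiv' j u) x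

/-!
The proof is Garofalo and Lin's frequency method with the weight `(s - |x - x₀|²)₊ᵐ`, for which all
boundary terms vanish. Write `H` for the weighted integral of `u²` and `D` for that of the energy
density `|∇u|² - k² q u²`. Suitably normalised, `N = D / H` is, up to a bounded error, the
derivative of `log H` in `t = log s`, and the Rellich identity together with Cauchy-Schwarz gives
`(N + C k)' ≥ -C (N + C k)`. So `log H` is almost convex in `t`, which is a three-balls inequality
for `H`. The large potential enters `N` only divided by `m`: with `m` of size `k`, its contribution
`k²` becomes `O(k)`, and comparing `H` with the unweighted integrals costs no more than
`2 ^ m = exp O(k)`.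
-/

open Metric Set

/-! ### Truncated power weights -/

theorem hasDerivAt_max_zero_pow (m : ℕ) (t : ℝ) :
    HasDerivAt (fun t : ℝ => max t 0 ^ (m + 2)) ((m + 2) * max t 0 ^ (m + 1)) t := by
  rcases lt_trichotomy t 0 with ht | rfl | ht
  · have hzero : (fun t : ℝ => max t 0 ^ (m + 2)) =ᶠ[nhds t] fun _ => 0 := by
      filter_upwards [Iio_mem_nhds ht] with y hy
      rw [max_eq_right (le_of_lt hy), zero_pow (by lia)]
    rw [max_eq_right ht.le, zero_pow (by lia), mul_zero]
    exact (hasDerivAt_const t (0 : ℝ)).congr_of_eventuallyEq hzero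
  · have hbound : (fun t : ℝ => max t 0 ^ (m + 2)) =O[nhds 0] fun t => t ^ (m + 2) := by
      refine Asymptotics.IsBigO.of_bound 1 (.of_forall fun y => ?_)
      rw [one_mul, norm_pow, norm_pow]
      gcongr
      rw [norm_of_nonneg (le_max_right _ _)]
      exact max_le (le_abs_self y) (norm_nonneg y)
    have hsmall : (fun t : ℝ => max t 0 ^ (m + 2)) =o[nhds 0] fun t => t :=
      hbound.trans_isLittleO (Asymptotics.isLittleO_pow_id (by lia))
    simpa [hasDerivAt_iff_isLittleO_nhds_zero] using hsmall
  · have hpow : (fun t : ℝ => max t 0 ^ (m + 2)) =ᶠ[nhds t] fun t => t ^ (m + 2) := by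
      filter_upwards [Ioi_mem_nhds ht] with y hy
      rw [max_eq_left (le_of_lt hy)]
    rw [max_eq_left ht.le]
    simpa using (hasDerivAt_pow (m + 2) t).congr_of_eventuallyEq hpow

theorem integral_abs_mul_le_sqrt {α : Type*} [MeasurableSpace α] {μ : Measure α} {f g : α → ℝ}
    (hf : MemLp f 2 μ) (hg : MemLp g 2 μ) :
    ∫ x, |f x * g x| ∂μ ≤ √((∫ x, f x ^ 2 ∂μ) * ∫ x, g x ^ 2 ∂μ) := by
  have hHolder := integral_mul_norm_le_Lp_mul_Lq (f := f) (g := g) HolderConjugate.two_two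
    (by simpa using hf) (by simpa using hg)
  rw [sqrt_mul (integral_nonneg fun x => sq_nonneg (f x)), sqrt_eq_rpow, sqrt_eq_rpow]
  simpa [abs_mul] using hHolder

section Bump

variable {E : Type*} [NormedAddCommGroup E] {x₀ : E} {R s : ℝ} {m : ℕ}

/-- The bump `(s - ‖x - x₀‖²)₊`, whose powers are the weights of the frequency function. It is
parametrised by the square `s` of its radius, in which it is piecewise affine. -/
noncomputable def bump (x₀ : E) (s : ℝ) (x : E) : ℝ := max (s - ‖x - x₀‖ ^ 2) 0

theorem bump_nonneg (x₀ : E) (s : ℝ) (x : E) : 0 ≤ bump x₀ s x := le_max_right _ _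

theorem bump_le {C : ℝ} (hs : s ≤ C) (hC : 0 ≤ C) (x : E) : bump x₀ s x ≤ C :=
  max_le (by linarith [sq_nonneg ‖x - x₀‖]) hC

theorem bump_eq_zero {x : E} (hR : 0 ≤ R) (hs : s ≤ R ^ 2) (hx : x ∉ ball x₀ R) :
    bump x₀ s x = 0 := by
  rw [mem_ball, dist_eq_norm, not_lt] at hx
  exact max_eq_right (by nlinarith)

theorem continuous_bump (x₀ : E) (s : ℝ) : Continuous (bump x₀ s) := by
  unfold bump; fun_prop

theorem norm_sub_sq_mul_bump (x₀ : E) (s : ℝ) (x : E) :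
    ‖x - x₀‖ ^ 2 * bump x₀ s x = s * bump x₀ s x - bump x₀ s x ^ 2 := by
  rcases le_total (s - ‖x - x₀‖ ^ 2) 0 with h | h
  · rw [bump, max_eq_right h]; ring
  · rw [bump, max_eq_left h]; ring

theorem hasDerivAt_bump_pow (x₀ : E) (m : ℕ) (s : ℝ) (x : E) :
    HasDerivAt (fun s => bump x₀ s x ^ (m + 2)) ((m + 2) * bump x₀ s x ^ (m + 1)) s := by
  have hsub : HasDerivAt (fun t : ℝ => t - ‖x - x₀‖ ^ 2) 1 s := (hasDerivAt_id s).sub_const _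
  simpa [bump, Function.comp_def] using (hasDerivAt_max_zero_pow m (s - ‖x - x₀‖ ^ 2)).comp s hsub

theorem hasFDerivAt_bump_pow {E : Type*} [NormedAddCommGroup E] [InnerProductSpace ℝ E]
    (x₀ : E) (m : ℕ) (s : ℝ) (x : E) :
    HasFDerivAt (fun x => bump x₀ s x ^ (m + 2))
      (-(2 * (m + 2) * bump x₀ s x ^ (m + 1)) • innerSL ℝ (x - x₀)) x := by
  have hsub : HasFDerivAt (fun x : E => s - ‖x - x₀‖ ^ 2) (-(2 • innerSL ℝ (x - x₀))) x := by
    simpa using (((hasFDerivAt_id x).sub_const x₀).norm_sq).const_sub s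
  refine ((hasDerivAt_max_zero_pow m (s - ‖x - x₀‖ ^ 2)).comp_hasFDerivAt x hsub).congr_fderiv ?_
  rw [← bump]
  module

theorem support_bump_pow_succ_mul_subset (hR : 0 ≤ R) (hs : s ≤ R ^ 2) (F : E → ℝ) :
    (Function.support fun x => bump x₀ s x ^ (m + 1) * F x) ⊆ closedBall x₀ R := by
  refine fun x hx => by_contra fun h => hx ?_
  dsimp only
  rw [bump_eq_zero hR hs fun hx' => h (ball_subset_closedBall hx'), zero_pow (by lia), zero_mul]

variable [MeasureSpace E]

/-- The measure `(s - ‖x - x₀‖²)₊ᵐ dx`, cut off at the closed ball of radius `R` about `x₀`, where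
the integrands are regular. For `s ≤ R ^ 2` and `m ≠ 0` the density vanishes outside that ball
anyway, so the cutoff has no effect. -/
noncomputable def bumpMeasure (x₀ : E) (R : ℝ) (m : ℕ) (s : ℝ) : Measure E :=
  (volume.restrict (closedBall x₀ R)).withDensity fun x => ENNReal.ofReal (bump x₀ s x ^ m)

variable [BorelSpace E]

theorem measurable_ofReal_bump_pow (x₀ : E) (s : ℝ) (m : ℕ) :
    Measurable fun x => ENNReal.ofReal (bump x₀ s x ^ m) :=
  ((continuous_bump x₀ s).pow m).measurable.ennreal_ofReal

theorem ae_bumpMeasure_of_forall_mem {P : E → Prop} (h : ∀ x ∈ closedBall x₀ R, P x) :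
    ∀ᵐ x ∂bumpMeasure x₀ R m s, P x :=
  (withDensity_absolutelyContinuous _ _).ae_le
    (ae_restrict_of_forall_mem measurableSet_closedBall h)

theorem integral_bumpMeasure (F : E → ℝ) :
    ∫ x, F x ∂bumpMeasure x₀ R m s = ∫ x in closedBall x₀ R, bump x₀ s x ^ m * F x := by
  rw [bumpMeasure, integral_withDensity_eq_integral_toReal_smul
    (measurable_ofReal_bump_pow x₀ s m) (by simp)]
  simp_rw [ENNReal.toReal_ofReal (pow_nonneg (bump_nonneg x₀ s _) m), smul_eq_mul]

theorem integral_bumpMeasure_congr {F G : E → ℝ} (h : ∀ x ∈ closedBall x₀ R, F x = G x) :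
    ∫ x, F x ∂bumpMeasure x₀ R m s = ∫ x, G x ∂bumpMeasure x₀ R m s :=
  integral_congr_ae (ae_bumpMeasure_of_forall_mem h)

theorem integral_bumpMeasure_eq_integral (hR : 0 ≤ R) (hs : s ≤ R ^ 2) (F : E → ℝ) :
    ∫ x, F x ∂bumpMeasure x₀ R (m + 1) s = ∫ x, bump x₀ s x ^ (m + 1) * F x := by
  rw [integral_bumpMeasure, setIntegral_eq_integral_of_forall_compl_eq_zero]
  exact fun x hx => Function.notMem_support.1 fun h =>
    hx (support_bump_pow_succ_mul_subset hR hs F h)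

variable [ProperSpace E] [IsFiniteMeasureOnCompacts (volume : Measure E)] {F G : E → ℝ}

theorem integrableOn_bump_pow_mul (hF : ContinuousOn F (closedBall x₀ R)) :
    IntegrableOn (fun x => bump x₀ s x ^ m * F x) (closedBall x₀ R) :=
  (((continuous_bump x₀ s).pow m).continuousOn.mul hF).integrableOn_compact
    (isCompact_closedBall x₀ R)

theorem integrable_bump_pow_succ_mul (hR : 0 ≤ R) (hs : s ≤ R ^ 2)
    (hF : ContinuousOn F (closedBall x₀ R)) : Integrable fun x => bump x₀ s x ^ (m + 1) * F x :=
  (integrableOn_iff_integrable_of_support_subset (support_bump_pow_succ_mul_subset hR hs F)).1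
    (integrableOn_bump_pow_mul hF)

theorem integrable_bumpMeasure (hF : ContinuousOn F (closedBall x₀ R)) :
    Integrable F (bumpMeasure x₀ R m s) := by
  rw [bumpMeasure, integrable_withDensity_iff_integrable_smul'
    (measurable_ofReal_bump_pow x₀ s m) (by simp)]
  simp_rw [ENNReal.toReal_ofReal (pow_nonneg (bump_nonneg x₀ s _) m), smul_eq_mul]
  exact integrableOn_bump_pow_mul hF

theorem memLp_two_bumpMeasure (hF : ContinuousOn F (closedBall x₀ R)) :
    MemLp F 2 (bumpMeasure x₀ R m s) :=
  (memLp_two_iff_integrable_sq (integrable_bumpMeasure hF).aestronglyMeasurable).2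
    (integrable_bumpMeasure (hF.pow 2))

theorem integral_bumpMeasure_succ_le (hs : s ≤ R ^ 2) (hF : ContinuousOn F (closedBall x₀ R))
    (hG : ContinuousOn G (closedBall x₀ R)) (hG0 : ∀ x ∈ closedBall x₀ R, 0 ≤ G x)
    (hFG : ∀ x ∈ closedBall x₀ R, R ^ 2 * F x ≤ G x) :
    ∫ x, F x ∂bumpMeasure x₀ R (m + 1) s ≤ ∫ x, G x ∂bumpMeasure x₀ R m s := by
  simp_rw [integral_bumpMeasure]
  refine setIntegral_mono_on (integrableOn_bump_pow_mul hF)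
    (integrableOn_bump_pow_mul hG) measurableSet_closedBall fun x hx => ?_
  have hbump : bump x₀ s x * F x ≤ G x := by
    rcases le_total 0 (F x) with hFx | hFx
    · exact (mul_le_mul_of_nonneg_right (bump_le hs (sq_nonneg R) x) hFx).trans (hFG x hx)
    · exact (mul_nonpos_of_nonneg_of_nonpos (bump_nonneg x₀ s x) hFx).trans (hG0 x hx)
  rw [pow_succ, mul_assoc]
  exact mul_le_mul_of_nonneg_left hbump (pow_nonneg (bump_nonneg x₀ s x) m)

theorem integral_norm_sub_sq_mul_bumpMeasure (hF : ContinuousOn F (closedBall x₀ R)) :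
    ∫ x, ‖x - x₀‖ ^ 2 * F x ∂bumpMeasure x₀ R (m + 1) s =
      s * ∫ x, F x ∂bumpMeasure x₀ R (m + 1) s - ∫ x, F x ∂bumpMeasure x₀ R (m + 2) s := by
  simp_rw [integral_bumpMeasure]
  rw [← integral_const_mul, ← integral_sub
    ((integrableOn_bump_pow_mul hF).const_mul s) (integrableOn_bump_pow_mul hF)]
  congr 1 with x
  linear_combination bump x₀ s x ^ m * F x * norm_sub_sq_mul_bump x₀ s x

theorem hasDerivAt_integral_bumpMeasure (hF : ContinuousOn F (closedBall x₀ R)) :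
    HasDerivAt (fun s => ∫ x, F x ∂bumpMeasure x₀ R (m + 2) s)
      ((m + 2) * ∫ x, F x ∂bumpMeasure x₀ R (m + 1) s) s := by
  simp_rw [integral_bumpMeasure, ← integral_const_mul]
  refine (hasDerivAt_integral_of_dominated_loc_of_deriv_le
    (F' := fun s x => (m + 2) * (bump x₀ s x ^ (m + 1) * F x))
    (bound := fun x => (m + 2) * ((|s| + 1) ^ (m + 1) * ‖F x‖))
    (ball_mem_nhds s one_pos)
    (.of_forall fun t => (integrableOn_bump_pow_mul hF).aestronglyMeasurable)
    (integrableOn_bump_pow_mul hF)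
    ((integrableOn_bump_pow_mul hF).const_mul _).aestronglyMeasurable ?_ ?_ ?_).2
  · refine .of_forall fun x t ht => ?_
    have ht' : t ≤ |s| + 1 := by
      rw [mem_ball, Real.dist_eq] at ht
      linarith [(abs_lt.1 ht).2, le_abs_self s]
    have hbump : bump x₀ t x ≤ |s| + 1 := bump_le ht' (by positivity) x
    rw [norm_mul, norm_mul, norm_of_nonneg (by positivity : (0 : ℝ) ≤ m + 2),
      norm_of_nonneg (pow_nonneg (bump_nonneg x₀ t x) _)]
    gcongr
    exact bump_nonneg x₀ t x
  · exact ((hF.integrableOn_compact (isCompact_closedBall x₀ R)).norm.const_mul _).const_mul _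
  · refine .of_forall fun x t _ => ?_
    exact ((hasDerivAt_bump_pow x₀ m t x).mul_const (F x)).congr_deriv (by ring)

theorem setIntegral_ball_le_integral_bumpMeasure {ρ : ℝ} (hρ : ρ ≤ R) (hρs : ρ ^ 2 ≤ s)
    (hF : ContinuousOn F (closedBall x₀ R)) (hF0 : ∀ x ∈ closedBall x₀ R, 0 ≤ F x) :
    (s - ρ ^ 2) ^ m * ∫ x in ball x₀ ρ, F x ≤ ∫ x, F x ∂bumpMeasure x₀ R m s := by
  have hsub : ball x₀ ρ ⊆ closedBall x₀ R :=
    ball_subset_closedBall.trans (closedBall_subset_closedBall hρ)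
  have hFi : IntegrableOn F (closedBall x₀ R) :=
    hF.integrableOn_compact (isCompact_closedBall x₀ R)
  have hbFi : IntegrableOn (fun x => bump x₀ s x ^ m * F x) (closedBall x₀ R) :=
    integrableOn_bump_pow_mul hF
  rw [integral_bumpMeasure, ← integral_const_mul]
  calc ∫ x in ball x₀ ρ, (s - ρ ^ 2) ^ m * F x
      ≤ ∫ x in ball x₀ ρ, bump x₀ s x ^ m * F x := by
        refine setIntegral_mono_on ((hFi.mono_set hsub).const_mul _) (hbFi.mono_set hsub)
          measurableSet_ball fun x hx => ?_
        have hnorm : ‖x - x₀‖ < ρ := by simpa [dist_eq_norm] using hx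
        have hbump : s - ρ ^ 2 ≤ bump x₀ s x :=
          le_max_of_le_left (by nlinarith [norm_nonneg (x - x₀)])
        exact mul_le_mul_of_nonneg_right (pow_le_pow_left₀ (by linarith) hbump m)
          (hF0 x (hsub hx))
    _ ≤ ∫ x in closedBall x₀ R, bump x₀ s x ^ m * F x :=
        setIntegral_mono_set hbFi
          (ae_restrict_of_forall_mem measurableSet_closedBall fun x hx =>
            mul_nonneg (pow_nonneg (bump_nonneg x₀ s x) m) (hF0 x hx))
          hsub.eventuallyLE

theorem integral_bumpMeasure_le_setIntegral_ball {ρ : ℝ} (hρ : 0 ≤ ρ) (hρR : ρ ≤ R)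
    (hF : ContinuousOn F (closedBall x₀ R)) (hF0 : ∀ x ∈ closedBall x₀ R, 0 ≤ F x) :
    ∫ x, F x ∂bumpMeasure x₀ R (m + 1) (ρ ^ 2) ≤
      (ρ ^ 2) ^ (m + 1) * ∫ x in ball x₀ ρ, F x := by
  have hsub : ball x₀ ρ ⊆ closedBall x₀ R :=
    ball_subset_closedBall.trans (closedBall_subset_closedBall hρR)
  have hFi : IntegrableOn F (closedBall x₀ R) :=
    hF.integrableOn_compact (isCompact_closedBall x₀ R)
  have hzero : ∀ x ∈ closedBall x₀ R \ ball x₀ ρ, bump x₀ (ρ ^ 2) x ^ (m + 1) * F x = 0 := by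
    intro x hx
    rw [bump_eq_zero hρ le_rfl hx.2, zero_pow (by lia), zero_mul]
  rw [integral_bumpMeasure, ← integral_const_mul,
    setIntegral_eq_of_subset_of_forall_sdiff_eq_zero measurableSet_closedBall hsub hzero]
  refine setIntegral_mono_on ((integrableOn_bump_pow_mul hF).mono_set hsub)
    ((hFi.mono_set hsub).const_mul _) measurableSet_ball fun x hx => ?_
  exact mul_le_mul_of_nonneg_right
    (pow_le_pow_left₀ (bump_nonneg _ _ x) (bump_le le_rfl (sq_nonneg ρ) x) _) (hF0 x (hsub hx))

end Bump

/-! ### Radial derivatives -/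

section RadialDeriv

variable {E : Type*} [NormedAddCommGroup E] [NormedSpace ℝ E] {x₀ x : E} {f g u : E → ℝ}

/-- The derivative of `u` along the radial vector field `x - x₀`, the generator of the dilations
about `x₀`. -/
noncomputable def radialDeriv (x₀ : E) (u : E → ℝ) (x : E) : ℝ := fderiv ℝ u x (x - x₀)

theorem radialDeriv_mul (hf : DifferentiableAt ℝ f x) (hg : DifferentiableAt ℝ g x) :
    radialDeriv x₀ (fun y => f y * g y) x =
      radialDeriv x₀ f x * g x + f x * radialDeriv x₀ g x := by
  simp only [radialDeriv, fderiv_fun_mul hf hg, add_apply, smul_apply, smul_eq_mul]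
  ring

theorem radialDeriv_const_mul (c : ℝ) (hf : DifferentiableAt ℝ f x) :
    radialDeriv x₀ (fun y => c * f y) x = c * radialDeriv x₀ f x := by
  simp only [radialDeriv, fderiv_const_mul hf, smul_apply, smul_eq_mul]

theorem radialDeriv_sq (hf : DifferentiableAt ℝ f x) :
    radialDeriv x₀ (fun y => f y ^ 2) x = 2 * f x * radialDeriv x₀ f x := by
  simp only [sq, radialDeriv_mul hf hf]
  ring

theorem radialDeriv_sub (hf : DifferentiableAt ℝ f x) (hg : DifferentiableAt ℝ g x) :
    radialDeriv x₀ (fun y => f y - g y) x = radialDeriv x₀ f x - radialDeriv x₀ g x := by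
  simp only [radialDeriv, fderiv_fun_sub hf hg, sub_apply]

theorem radialDeriv_sum {ι : Type*} [Fintype ι] {f : ι → E → ℝ}
    (hf : ∀ i, DifferentiableAt ℝ (f i) x) :
    radialDeriv x₀ (fun y => ∑ i, f i y) x = ∑ i, radialDeriv x₀ (f i) x := by
  simp only [radialDeriv, fderiv_fun_sum fun i _ => hf i, sum_apply]

theorem contDiffAt_radialDeriv {a b : WithTop ℕ∞} (hu : ContDiffAt ℝ b u x) (hab : a + 1 ≤ b) :
    ContDiffAt ℝ a (radialDeriv x₀ u) x :=
  (hu.fderiv_right hab).clm_apply (contDiffAt_id.sub contDiffAt_const)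

theorem continuousOn_radialDeriv {S : Set E} (hu : ∀ x ∈ S, ContDiffAt ℝ 1 u x) :
    ContinuousOn (radialDeriv x₀ u) S := fun x hx =>
  (contDiffAt_radialDeriv (a := 0) (hu x hx) (by norm_num)).continuousAt.continuousWithinAt

theorem fderiv_radialDeriv (hu : ContDiffAt ℝ 2 u x) (v : E) :
    fderiv ℝ (radialDeriv x₀ u) x v =
      fderiv ℝ u x v + radialDeriv x₀ (fun y => fderiv ℝ u y v) x := by
  have hu' : HasFDerivAt (fderiv ℝ u) (fderiv ℝ (fderiv ℝ u) x) x :=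
    ((hu.fderiv_right (m := 1) (by norm_num)).differentiableAt one_ne_zero).hasFDerivAt
  have hsymm : fderiv ℝ (fderiv ℝ u) x v (x - x₀) = fderiv ℝ (fderiv ℝ u) x (x - x₀) v :=
    hu.isSymmSndFDerivAt (by simp) v (x - x₀)
  have hradial : HasFDerivAt (fun y => y - x₀) (ContinuousLinearMap.id ℝ E) x :=
    (hasFDerivAt_id x).sub_const x₀
  unfold radialDeriv
  rw [(hu'.clm_apply hradial).fderiv, (hu'.clm_apply (hasFDerivAt_const v x)).fderiv]
  simpa using hsymm

end RadialDeriv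

theorem radialDeriv_le_norm_gradient_mul {E : Type*} [NormedAddCommGroup E] [InnerProductSpace ℝ E]
    [CompleteSpace E] (x₀ : E) (f : E → ℝ) (x : E) :
    radialDeriv x₀ f x ≤ ‖gradient f x‖ * ‖x - x₀‖ := by
  rw [radialDeriv, ← InnerProductSpace.toDual_symm_apply]
  exact real_inner_le_norm _ _

theorem integral_fderiv_bumpMeasure {E : Type*} [NormedAddCommGroup E] [InnerProductSpace ℝ E]
    [FiniteDimensional ℝ E] [MeasureSpace E] [BorelSpace E]
    [(volume : Measure E).IsAddHaarMeasure] {x₀ : E} {R s : ℝ} (hR : 0 ≤ R) (hs : s ≤ R ^ 2)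
    {X : E → ℝ} (hX : ∀ x ∈ closedBall x₀ R, ContDiffAt ℝ 1 X x) (m : ℕ) (v : E) :
    ∫ x, fderiv ℝ X x v ∂bumpMeasure x₀ R (m + 2) s =
      2 * (m + 2) * ∫ x, inner ℝ (x - x₀) v * X x ∂bumpMeasure x₀ R (m + 1) s := by
  have hXc : ContinuousOn X (closedBall x₀ R) := fun x hx =>
    (hX x hx).continuousAt.continuousWithinAt
  have hX'c : ContinuousOn (fun x => fderiv ℝ X x v) (closedBall x₀ R) := fun x hx =>
    (((hX x hx).fderiv_right (m := 0) (by norm_num)).continuousAt.clm_apply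
      continuousAt_const).continuousWithinAt
  have hbump' (x : E) : fderiv ℝ (fun x => bump x₀ s x ^ (m + 2)) x v * X x =
      -(2 * (m + 2) * (bump x₀ s x ^ (m + 1) * (inner ℝ (x - x₀) v * X x))) := by
    rw [(hasFDerivAt_bump_pow x₀ m s x).fderiv]
    simp only [smul_apply, innerSL_apply_apply, smul_eq_mul]
    ring
  have hparts := integral_mul_fderiv_eq_neg_fderiv_mul_of_integrable (μ := volume)
    (f := fun x => bump x₀ s x ^ (m + 2)) (g := X) (v := v)
    (by
      simp_rw [hbump']
      exact ((integrable_bump_pow_succ_mul hR hs (by fun_prop)).const_mul _).neg)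
    (integrable_bump_pow_succ_mul hR hs hX'c) (integrable_bump_pow_succ_mul hR hs hXc)
    (fun x _ => (hasFDerivAt_bump_pow x₀ m s x).differentiableAt) ?_
  · simp_rw [hbump', integral_neg, neg_neg, integral_const_mul] at hparts
    rw [integral_bumpMeasure_eq_integral hR hs, integral_bumpMeasure_eq_integral hR hs, hparts]
  · intro x hx
    have htsupp : tsupport (fun x => bump x₀ s x ^ (m + 2)) ⊆ closedBall x₀ R :=
      closure_minimal
        (by simpa using support_bump_pow_succ_mul_subset (m := m + 1) hR hs fun _ => 1)
        isClosed_closedBall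
    exact (hX x (htsupp hx)).differentiableAt one_ne_zero

/-! ### Green and Rellich identities -/

section PartialDerivatives

variable {n : ℕ} {x₀ x : EuclideanSpace ℝ (Fin n)} {f g p u : EuclideanSpace ℝ (Fin n) → ℝ}

theorem pderiv'_mul (j : Fin n) (hf : DifferentiableAt ℝ f x) (hg : DifferentiableAt ℝ g x) :
    pderiv' j (fun y => f y * g y) x = pderiv' j f x * g x + f x * pderiv' j g x := by
  simp only [pderiv', fderiv_fun_mul hf hg, add_apply, smul_apply, smul_eq_mul]
  ring

theorem pderiv'_coord_sub (i j : Fin n) (x₀ x : EuclideanSpace ℝ (Fin n)) :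
    pderiv' j (fun y => y i - x₀ i) x = if i = j then 1 else 0 := by
  have hcoord : HasFDerivAt (fun y : EuclideanSpace ℝ (Fin n) => y i - x₀ i)
      (EuclideanSpace.proj i : EuclideanSpace ℝ (Fin n) →L[ℝ] ℝ) x :=
    (EuclideanSpace.proj i : EuclideanSpace ℝ (Fin n) →L[ℝ] ℝ).hasFDerivAt.sub_const _
  simp [pderiv', hcoord.fderiv]

theorem contDiffAt_pderiv' {a b : WithTop ℕ∞} (hu : ContDiffAt ℝ b u x) (hab : a + 1 ≤ b)
    (j : Fin n) : ContDiffAt ℝ a (pderiv' j u) x :=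
  (hu.fderiv_right hab).clm_apply contDiffAt_const

theorem radialDeriv_eq_sum (x₀ : EuclideanSpace ℝ (Fin n)) (u : EuclideanSpace ℝ (Fin n) → ℝ)
    (x : EuclideanSpace ℝ (Fin n)) :
    radialDeriv x₀ u x = ∑ j, (x j - x₀ j) * pderiv' j u x := by
  have hbasis := (EuclideanSpace.basisFun (Fin n) ℝ).sum_repr (x - x₀)
  rw [radialDeriv, ← hbasis, map_sum]
  simp [pderiv']

theorem sum_pderiv'_mul_pderiv' (hg : DifferentiableAt ℝ g x) (hu : ContDiffAt ℝ 2 u x) :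
    ∑ j, pderiv' j (fun y => g y * pderiv' j u y) x =
      ∑ j, pderiv' j g x * pderiv' j u x + g x * lap u x := by
  have hu' (j : Fin n) : DifferentiableAt ℝ (pderiv' j u) x :=
    (contDiffAt_pderiv' (a := 1) hu (by norm_num) j).differentiableAt one_ne_zero
  simp only [pderiv'_mul _ hg (hu' _), Finset.sum_add_distrib, lap, Finset.mul_sum]

theorem sum_pderiv'_coord_sub_mul (hg : DifferentiableAt ℝ g x) :
    ∑ j, pderiv' j (fun y => (y j - x₀ j) * g y) x = n * g x + radialDeriv x₀ g x := by
  have hcoord (j : Fin n) :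
      DifferentiableAt ℝ (fun y : EuclideanSpace ℝ (Fin n) => y j - x₀ j) x := by fun_prop
  simp only [pderiv'_mul _ (hcoord _) hg, pderiv'_coord_sub, if_true, one_mul,
    Finset.sum_add_distrib, radialDeriv_eq_sum, Finset.sum_const, Finset.card_univ,
    Fintype.card_fin, nsmul_eq_mul]

/-- The energy density `|∇u|² - p u²` of the equation `Δu + p u = 0`. -/
noncomputable def energyDensity (p u : EuclideanSpace ℝ (Fin n) → ℝ)
    (x : EuclideanSpace ℝ (Fin n)) : ℝ :=
  ∑ j, pderiv' j u x ^ 2 - p x * u x ^ 2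

/-- The Helmholtz operator `Δu + p u` with variable potential `p`. -/
noncomputable def helmholtz (p u : EuclideanSpace ℝ (Fin n) → ℝ)
    (x : EuclideanSpace ℝ (Fin n)) : ℝ :=
  lap u x + p x * u x

/-- The defect in the Rellich identity: it vanishes when `u` is harmonic and `p = 0`. -/
noncomputable def energyErrorDensity (x₀ : EuclideanSpace ℝ (Fin n))
    (p u : EuclideanSpace ℝ (Fin n) → ℝ) (x : EuclideanSpace ℝ (Fin n)) : ℝ :=
  (radialDeriv x₀ p x + 2 * p x) * u x ^ 2 + 2 * (helmholtz p u x * radialDeriv x₀ u x)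

theorem sum_pderiv'_mul_self_add_mul_lap (p u : EuclideanSpace ℝ (Fin n) → ℝ)
    (x : EuclideanSpace ℝ (Fin n)) :
    ∑ j, pderiv' j u x * pderiv' j u x + u x * lap u x =
      energyDensity p u x + u x * helmholtz p u x := by
  simp only [energyDensity, helmholtz, sq]
  ring

theorem radialDeriv_energyDensity (hp : DifferentiableAt ℝ p x) (hu : ContDiffAt ℝ 2 u x) :
    radialDeriv x₀ (energyDensity p u) x =
      2 * ∑ j, pderiv' j u x * radialDeriv x₀ (pderiv' j u) x -
        (radialDeriv x₀ p x * u x ^ 2 + 2 * p x * u x * radialDeriv x₀ u x) := by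
  have hud : DifferentiableAt ℝ u x := hu.differentiableAt two_ne_zero
  have hu' (j : Fin n) : DifferentiableAt ℝ (pderiv' j u) x :=
    (contDiffAt_pderiv' (a := 1) hu (by norm_num) j).differentiableAt one_ne_zero
  unfold energyDensity
  rw [radialDeriv_sub (by fun_prop) (by fun_prop), radialDeriv_sum fun j => (hu' j).fun_pow 2,
    radialDeriv_mul hp (hud.fun_pow 2), radialDeriv_sq hud, Finset.mul_sum]
  simp only [radialDeriv_sq (hu' _)]
  simp only [mul_assoc, mul_left_comm]

theorem sum_pderiv'_radialDeriv_mul (hu : ContDiffAt ℝ 2 u x) :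
    ∑ j, pderiv' j (radialDeriv x₀ u) x * pderiv' j u x =
      ∑ j, pderiv' j u x ^ 2 + ∑ j, pderiv' j u x * radialDeriv x₀ (pderiv' j u) x := by
  have hcomm (j : Fin n) : pderiv' j (radialDeriv x₀ u) x =
      pderiv' j u x + radialDeriv x₀ (pderiv' j u) x := fderiv_radialDeriv hu _
  rw [← Finset.sum_add_distrib]
  exact Finset.sum_congr rfl fun j _ => by rw [hcomm]; ring

theorem rellich_identity (hp : DifferentiableAt ℝ p x) (hu : ContDiffAt ℝ 2 u x) :
    2 * (∑ j, pderiv' j (radialDeriv x₀ u) x * pderiv' j u x + radialDeriv x₀ u x * lap u x) =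
      radialDeriv x₀ (energyDensity p u) x + 2 * energyDensity p u x +
        energyErrorDensity x₀ p u x := by
  rw [radialDeriv_energyDensity hp hu, sum_pderiv'_radialDeriv_mul hu, energyDensity,
    energyErrorDensity, helmholtz]
  ring

variable {R s : ℝ} {m : ℕ}

theorem integral_pderiv'_bumpMeasure (hR : 0 ≤ R) (hs : s ≤ R ^ 2)
    {X : EuclideanSpace ℝ (Fin n) → ℝ} (hX : ∀ x ∈ closedBall x₀ R, ContDiffAt ℝ 1 X x)
    (j : Fin n) :
    ∫ x, pderiv' j X x ∂bumpMeasure x₀ R (m + 2) s =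
      2 * (m + 2) * ∫ x, (x j - x₀ j) * X x ∂bumpMeasure x₀ R (m + 1) s := by
  simpa [pderiv', EuclideanSpace.inner_single_right] using
    integral_fderiv_bumpMeasure hR hs hX m (EuclideanSpace.single j 1)

theorem integral_sum_pderiv'_bumpMeasure (hR : 0 ≤ R) (hs : s ≤ R ^ 2)
    {X : Fin n → EuclideanSpace ℝ (Fin n) → ℝ}
    (hX : ∀ j, ∀ x ∈ closedBall x₀ R, ContDiffAt ℝ 1 (X j) x) :
    ∫ x, ∑ j, pderiv' j (X j) x ∂bumpMeasure x₀ R (m + 2) s =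
      2 * (m + 2) * ∫ x, ∑ j, (x j - x₀ j) * X j x ∂bumpMeasure x₀ R (m + 1) s := by
  have hXc (j : Fin n) : ContinuousOn (X j) (closedBall x₀ R) := fun x hx =>
    (hX j x hx).continuousAt.continuousWithinAt
  have hX'c (j : Fin n) : ContinuousOn (pderiv' j (X j)) (closedBall x₀ R) := fun x hx =>
    (contDiffAt_pderiv' (a := 0) (hX j x hx) (by norm_num) j).continuousAt.continuousWithinAt
  rw [integral_finsetSum _ fun j _ => integrable_bumpMeasure (hX'c j), integral_finsetSum _
    fun j _ => integrable_bumpMeasure (by have := hXc j; fun_prop), Finset.mul_sum]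
  exact Finset.sum_congr rfl fun j _ => integral_pderiv'_bumpMeasure hR hs (hX j) j

theorem integral_green_bumpMeasure (hR : 0 ≤ R) (hs : s ≤ R ^ 2)
    (hg : ∀ x ∈ closedBall x₀ R, ContDiffAt ℝ 1 g x)
    (hu : ∀ x ∈ closedBall x₀ R, ContDiffAt ℝ 2 u x) :
    ∫ x, (∑ j, pderiv' j g x * pderiv' j u x + g x * lap u x) ∂bumpMeasure x₀ R (m + 2) s =
      2 * (m + 2) * ∫ x, g x * radialDeriv x₀ u x ∂bumpMeasure x₀ R (m + 1) s := by
  have hdiv := integral_sum_pderiv'_bumpMeasure (m := m) hR hs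
    (X := fun j y => g y * pderiv' j u y)
    fun j x hx => (hg x hx).mul (contDiffAt_pderiv' (hu x hx) (by norm_num) j)
  rw [integral_bumpMeasure_congr fun x hx =>
    sum_pderiv'_mul_pderiv' ((hg x hx).differentiableAt one_ne_zero) (hu x hx)] at hdiv
  simpa only [radialDeriv_eq_sum, Finset.mul_sum, mul_left_comm] using hdiv

theorem integral_radialDeriv_bumpMeasure (hR : 0 ≤ R) (hs : s ≤ R ^ 2)
    (hg : ∀ x ∈ closedBall x₀ R, ContDiffAt ℝ 1 g x) :
    ∫ x, radialDeriv x₀ g x ∂bumpMeasure x₀ R (m + 2) s =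
      2 * (m + 2) * (s * ∫ x, g x ∂bumpMeasure x₀ R (m + 1) s) -
        (2 * (m + 2) + n) * ∫ x, g x ∂bumpMeasure x₀ R (m + 2) s := by
  have hgc : ContinuousOn g (closedBall x₀ R) := fun x hx =>
    (hg x hx).continuousAt.continuousWithinAt
  have hdiv := integral_sum_pderiv'_bumpMeasure (m := m) hR hs
    (X := fun j y => (y j - x₀ j) * g y) fun j x hx => by
      have := hg x hx
      fun_prop
  have hnorm (x : EuclideanSpace ℝ (Fin n)) :
      ∑ j, (x j - x₀ j) * ((x j - x₀ j) * g x) = ‖x - x₀‖ ^ 2 * g x := by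
    simp only [EuclideanSpace.real_norm_sq_eq, PiLp.sub_apply, Finset.sum_mul, sq (_ - _),
      mul_assoc]
  rw [integral_bumpMeasure_congr fun x hx => sum_pderiv'_coord_sub_mul
    ((hg x hx).differentiableAt one_ne_zero), integral_add
    ((integrable_bumpMeasure hgc).const_mul _)
    (integrable_bumpMeasure (continuousOn_radialDeriv hg)), integral_const_mul] at hdiv
  simp_rw [hnorm, integral_norm_sub_sq_mul_bumpMeasure hgc] at hdiv
  linear_combination hdiv

theorem hasDerivAt_exp_mul_integral_bumpMeasure {t : ℝ} (hR : 0 ≤ R) (ht : exp t ≤ R ^ 2)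
    (hg : ∀ x ∈ closedBall x₀ R, ContDiffAt ℝ 1 g x) (c : ℝ) :
    HasDerivAt (fun t => exp (-(c * t)) * ∫ x, g x ∂bumpMeasure x₀ R (m + 2) (exp t))
      (exp (-(c * t)) * ((m + 2 + n / 2 - c) * ∫ x, g x ∂bumpMeasure x₀ R (m + 2) (exp t) +
        (∫ x, radialDeriv x₀ g x ∂bumpMeasure x₀ R (m + 2) (exp t)) / 2)) t := by
  have hgc : ContinuousOn g (closedBall x₀ R) := fun x hx =>
    (hg x hx).continuousAt.continuousWithinAt
  have hexp : HasDerivAt (fun t => exp (-(c * t))) (exp (-(c * t)) * -c) t := by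
    simpa using (((hasDerivAt_id t).const_mul c).neg).exp
  refine (hexp.mul ((hasDerivAt_integral_bumpMeasure (m := m) hgc).comp t
    (hasDerivAt_exp t))).congr_deriv ?_
  simp only [Function.comp_apply]
  rw [integral_radialDeriv_bumpMeasure hR ht hg]
  ring

end PartialDerivatives

/-! ### Height, flux and energy -/

section Frequency

variable {n : ℕ} {x₀ : EuclideanSpace ℝ (Fin n)} {p u : EuclideanSpace ℝ (Fin n) → ℝ}
  {R s t : ℝ} {m : ℕ}

/-- The weighted square mean `∫ u² (s - |x - x₀|²)₊^(m+2)`, whose growth in `s` is studied. -/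
noncomputable def height (x₀ : EuclideanSpace ℝ (Fin n)) (R : ℝ) (m : ℕ)
    (u : EuclideanSpace ℝ (Fin n) → ℝ) (s : ℝ) : ℝ :=
  ∫ x, u x ^ 2 ∂bumpMeasure x₀ R (m + 2) s

/-- The weighted integral of `u Zu`, with `Z` the radial derivative: up to normalisation, the
derivative of the height in `log s`. -/
noncomputable def flux (x₀ : EuclideanSpace ℝ (Fin n)) (R : ℝ) (m : ℕ)
    (u : EuclideanSpace ℝ (Fin n) → ℝ) (s : ℝ) : ℝ :=
  ∫ x, u x * radialDeriv x₀ u x ∂bumpMeasure x₀ R (m + 2) s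

/-- The weighted integral of `(Zu)²`, with `Z` the radial derivative: the principal part of the
derivative of the energy in `log s`. -/
noncomputable def radialEnergy (x₀ : EuclideanSpace ℝ (Fin n)) (R : ℝ) (m : ℕ)
    (u : EuclideanSpace ℝ (Fin n) → ℝ) (s : ℝ) : ℝ :=
  ∫ x, radialDeriv x₀ u x ^ 2 ∂bumpMeasure x₀ R (m + 2) s

/-- The weighted energy of `Δu + p u = 0`; its quotient by the height is the frequency function.
The weight has one more power than that of the height, and the factor is such that energy and flux
agree when the equation holds. -/
noncomputable def energy (x₀ : EuclideanSpace ℝ (Fin n)) (R : ℝ) (m : ℕ)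
    (p u : EuclideanSpace ℝ (Fin n) → ℝ) (s : ℝ) : ℝ :=
  (∫ x, energyDensity p u x ∂bumpMeasure x₀ R (m + 3) s) / (2 * (m + 3))

/-- The contribution of the Rellich defect to the derivative of the energy in `log s`. -/
noncomputable def energyError (x₀ : EuclideanSpace ℝ (Fin n)) (R : ℝ) (m : ℕ)
    (p u : EuclideanSpace ℝ (Fin n) → ℝ) (s : ℝ) : ℝ :=
  -(∫ x, energyErrorDensity x₀ p u x ∂bumpMeasure x₀ R (m + 3) s) / (4 * (m + 3))

theorem hasDerivAt_exp_mul_height (hR : 0 ≤ R) (ht : exp t ≤ R ^ 2)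
    (hu : ∀ x ∈ closedBall x₀ R, ContDiffAt ℝ 1 u x) :
    HasDerivAt (fun t => exp (-((m + 2 + n / 2) * t)) * height x₀ R m u (exp t))
      (exp (-((m + 2 + n / 2) * t)) * flux x₀ R m u (exp t)) t := by
  have hsq : ∀ x ∈ closedBall x₀ R,
      radialDeriv x₀ (fun y => u y ^ 2) x = 2 * (u x * radialDeriv x₀ u x) := fun x hx => by
    rw [radialDeriv_sq ((hu x hx).differentiableAt one_ne_zero), mul_assoc]
  refine (hasDerivAt_exp_mul_integral_bumpMeasure hR ht
    (fun x hx => (hu x hx).pow 2) _).congr_deriv ?_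
  rw [integral_bumpMeasure_congr hsq, integral_const_mul, flux]
  ring

section Regularity

variable (hp : ∀ x ∈ closedBall x₀ R, ContDiffAt ℝ 1 p x)
  (hu : ∀ x ∈ closedBall x₀ R, ContDiffAt ℝ 2 u x)
include hp hu

theorem contDiffAt_energyDensity :
    ∀ x ∈ closedBall x₀ R, ContDiffAt ℝ 1 (energyDensity p u) x := fun x hx =>
  (ContDiffAt.sum fun j _ => (contDiffAt_pderiv' (hu x hx) (by norm_num) j).pow 2).sub
    ((hp x hx).mul (((hu x hx).of_le one_le_two).pow 2))

theorem continuousOn_helmholtz : ContinuousOn (helmholtz p u) (closedBall x₀ R) := fun x hx =>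
  have hlap : ContDiffAt ℝ 0 (lap u) x := ContDiffAt.sum fun j _ => contDiffAt_pderiv'
    (contDiffAt_pderiv' (a := 1) (hu x hx) (by norm_num) j) (by norm_num) j
  (hlap.continuousAt.add ((hp x hx).continuousAt.mul
    (hu x hx).continuousAt)).continuousWithinAt

theorem continuousOn_energyErrorDensity :
    ContinuousOn (energyErrorDensity x₀ p u) (closedBall x₀ R) := by
  have hpc : ContinuousOn p (closedBall x₀ R) := fun x hx =>
    (hp x hx).continuousAt.continuousWithinAt
  have huc : ContinuousOn u (closedBall x₀ R) := fun x hx =>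
    (hu x hx).continuousAt.continuousWithinAt
  have hZu : ContinuousOn (radialDeriv x₀ u) (closedBall x₀ R) :=
    continuousOn_radialDeriv fun x hx => (hu x hx).of_le one_le_two
  have hZp : ContinuousOn (radialDeriv x₀ p) (closedBall x₀ R) := continuousOn_radialDeriv hp
  have hf : ContinuousOn (helmholtz p u) (closedBall x₀ R) := continuousOn_helmholtz hp hu
  unfold energyErrorDensity
  fun_prop

theorem flux_eq_energy_add (hR : 0 ≤ R) (hs : s ≤ R ^ 2) :
    flux x₀ R m u s = energy x₀ R m p u s +
      (∫ x, u x * helmholtz p u x ∂bumpMeasure x₀ R (m + 3) s) / (2 * (m + 3)) := by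
  have hgreen := integral_green_bumpMeasure (m := m + 1) hR hs
    (fun x hx => (hu x hx).of_le one_le_two) hu
  rw [integral_bumpMeasure_congr fun x _ => sum_pderiv'_mul_self_add_mul_lap p u x,
    integral_add (integrable_bumpMeasure _) (integrable_bumpMeasure _)] at hgreen
  · rw [energy, flux, ← add_div, hgreen]
    push_cast
    field_simp
    ring
  · exact fun x hx => (contDiffAt_energyDensity hp hu x hx).continuousAt.continuousWithinAt
  · exact ContinuousOn.mul (fun x hx => (hu x hx).continuousAt.continuousWithinAt)
      (continuousOn_helmholtz hp hu)

theorem integral_radialDeriv_energyDensity (hR : 0 ≤ R) (hs : s ≤ R ^ 2) :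
    ∫ x, radialDeriv x₀ (energyDensity p u) x ∂bumpMeasure x₀ R (m + 3) s =
      4 * (m + 3) * (radialEnergy x₀ R m u s - energy x₀ R m p u s +
        energyError x₀ R m p u s) := by
  have he := contDiffAt_energyDensity hp hu
  have hec : ContinuousOn (energyDensity p u) (closedBall x₀ R) := fun x hx =>
    (he x hx).continuousAt.continuousWithinAt
  have hgreen := integral_green_bumpMeasure (m := m + 1) hR hs
    (fun x hx => contDiffAt_radialDeriv (x₀ := x₀) (hu x hx) (a := 1) (by norm_num)) hu
  have hrellich := integral_bumpMeasure_congr (m := m + 3) (s := s) fun x hx =>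
    rellich_identity (x₀ := x₀) ((hp x hx).differentiableAt one_ne_zero) (hu x hx)
  rw [integral_const_mul, hgreen, integral_add (integrable_bumpMeasure ?_)
    (integrable_bumpMeasure (continuousOn_energyErrorDensity hp hu)),
    integral_add (integrable_bumpMeasure (continuousOn_radialDeriv he))
      (integrable_bumpMeasure (hec.const_mul 2)), integral_const_mul] at hrellich
  · simp only [radialEnergy, energy, energyError]
    push_cast at hrellich
    field_simp
    simp only [← sq] at hrellich ⊢
    linear_combination -2 * hrellich
  · exact (continuousOn_radialDeriv he).add (hec.const_mul 2)

theorem hasDerivAt_exp_mul_energy (hR : 0 ≤ R) (ht : exp t ≤ R ^ 2) :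
    HasDerivAt (fun t => exp (-((m + 2 + n / 2) * t)) * energy x₀ R m p u (exp t))
      (exp (-((m + 2 + n / 2) * t)) *
        (radialEnergy x₀ R m u (exp t) + energyError x₀ R m p u (exp t))) t := by
  have hderiv := (hasDerivAt_exp_mul_integral_bumpMeasure (m := m + 1) hR ht
    (contDiffAt_energyDensity hp hu) (m + 2 + n / 2)).div_const (2 * (m + 3))
  simp only [mul_div_assoc] at hderiv
  refine hderiv.congr_deriv ?_
  rw [integral_radialDeriv_energyDensity hp hu hR ht, energy]
  push_cast
  field_simp
  ring

end Regularity
end Frequency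

/-! ### Almost monotonicity of the frequency -/

/-- The pointwise inequalities between the height `h`, the flux `J`, the energy `P`, the radial
energy `Z` and the energy error `E` from which the frequency method draws its conclusions, with
structural constant `A` and frequency parameter `k`. -/
structure FrequencyBounds (A k h J P Z E : ℝ) : Prop where
  height_nonneg : 0 ≤ h
  radialEnergy_nonneg : 0 ≤ Z
  abs_flux_sub_energy_le : |J - P| ≤ A * h
  flux_sq_le : J ^ 2 ≤ Z * h
  neg_le_energyError : -(A * (k * h + √(Z * h))) ≤ E
  neg_le_energy : -(A * (k * h)) ≤ P

/-- On `I`, the height `h` has derivative the flux `J`, the energy `P` has derivative `Z + E`, and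
the quantities are related by `FrequencyBounds`. -/
structure FrequencySystem (A k : ℝ) (h J P Z E : ℝ → ℝ) (I : Set ℝ) : Prop where
  hasDerivAt_height : ∀ t ∈ I, HasDerivAt h (J t) t
  hasDerivAt_energy : ∀ t ∈ I, HasDerivAt P (Z t + E t) t
  bounds : ∀ t ∈ I, FrequencyBounds A k (h t) (J t) (P t) (Z t) (E t)

namespace FrequencyBounds

variable {A k h J P Z E : ℝ}

theorem const_mul (H : FrequencyBounds A k h J P Z E) {c : ℝ} (hc : 0 ≤ c) :
    FrequencyBounds A k (c * h) (c * J) (c * P) (c * Z) (c * E) where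
  height_nonneg := mul_nonneg hc H.height_nonneg
  radialEnergy_nonneg := mul_nonneg hc H.radialEnergy_nonneg
  abs_flux_sub_energy_le := by
    rw [← mul_sub, abs_mul, abs_of_nonneg hc]
    linear_combination c * H.abs_flux_sub_energy_le
  flux_sq_le := by linear_combination c ^ 2 * H.flux_sq_le
  neg_le_energyError := by
    rw [show c * Z * (c * h) = c ^ 2 * (Z * h) by ring, sqrt_mul (sq_nonneg c), sqrt_sq hc]
    linear_combination c * H.neg_le_energyError
  neg_le_energy := by linear_combination c * H.neg_le_energy

theorem add_height (H : FrequencyBounds A k h J P Z E) (hA : 0 ≤ A) (hk : 0 ≤ k) {ε : ℝ}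
    (hε : 0 ≤ ε) : FrequencyBounds A k (h + ε) J P Z E where
  height_nonneg := add_nonneg H.height_nonneg hε
  radialEnergy_nonneg := H.radialEnergy_nonneg
  abs_flux_sub_energy_le := H.abs_flux_sub_energy_le.trans (by gcongr; linarith)
  flux_sq_le := H.flux_sq_le.trans
    (mul_le_mul_of_nonneg_left (le_add_of_nonneg_right hε) H.radialEnergy_nonneg)
  neg_le_energyError := by
    have hsqrt : √(Z * h) ≤ √(Z * (h + ε)) := sqrt_le_sqrt
      (mul_le_mul_of_nonneg_left (le_add_of_nonneg_right hε) H.radialEnergy_nonneg)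
    refine le_trans (neg_le_neg ?_) H.neg_le_energyError
    gcongr
    linarith
  neg_le_energy := le_trans (neg_le_neg (by gcongr; linarith)) H.neg_le_energy

theorem abs_div_sub_div_le (H : FrequencyBounds A k h J P Z E) (hh : 0 < h) :
    |J / h - P / h| ≤ A := by
  rw [← sub_div, abs_div, abs_of_pos hh, div_le_iff₀ hh]
  exact H.abs_flux_sub_energy_le

theorem neg_le_div (H : FrequencyBounds A k h J P Z E) (hh : 0 < h) : -(A * k) ≤ P / h := by
  rw [le_div_iff₀ hh]
  linear_combination H.neg_le_energy

/-- The Cauchy-Schwarz inequality `J² ≤ Z h` absorbs the quadratic terms of the derivative of the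
frequency `P / h`; what remains is linear in the frequency. -/
theorem neg_le_deriv_frequency (H : FrequencyBounds A k h J P Z E) (hA : 0 ≤ A) (hk : 1 ≤ k)
    (hh : 0 < h) :
    -(2 * A * (P / h + (4 * A + 1) * k)) ≤ ((Z + E) * h - P * J) / h ^ 2 := by
  have hflux := H.abs_div_sub_div_le hh
  have henergy := H.neg_le_div hh
  set j := J / h with hj
  set N := P / h with hN
  set S := √(Z / h) with hS
  have hS_sq : S ^ 2 = Z / h := sq_sqrt (div_nonneg H.radialEnergy_nonneg hh.le)
  have hj_le : |j| ≤ S := abs_le_sqrt (by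
    rw [hj, div_pow, div_le_div_iff₀ (by positivity) hh]
    linear_combination h * H.flux_sq_le)
  have herror : -(A * (k + S)) ≤ E / h := by
    have hsqrt : √(Z * h) = S * h := by
      rw [show Z * h = Z / h * h ^ 2 by field_simp,
        sqrt_mul (div_nonneg H.radialEnergy_nonneg hh.le), sqrt_sq hh.le]
    rw [le_div_iff₀ hh]
    have := H.neg_le_energyError
    rw [hsqrt] at this
    linarith
  have hquotient : ((Z + E) * h - P * J) / h ^ 2 = S ^ 2 + E / h - N * j := by
    rw [hS_sq, hj, hN]
    field_simp
  have hproduct : N * j ≤ |j| ^ 2 + A * |j| := by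
    have : (N - j) * j ≤ A * |j| := (le_abs_self _).trans (by
      rw [abs_mul, abs_sub_comm]
      gcongr)
    rw [sq_abs]
    linarith
  have habs : |j| ≤ N + 2 * (A * k) + A := by
    rw [abs_le] at hflux ⊢
    constructor <;> nlinarith
  rw [hquotient]
  nlinarith [sq_nonneg (S - |j| - A), mul_nonneg (sub_nonneg.2 hj_le) (abs_nonneg j),
    mul_le_mul_of_nonneg_left habs hA, mul_le_mul_of_nonneg_left hk (sq_nonneg A),
    mul_le_mul_of_nonneg_left hk hA, mul_nonneg hA (sub_nonneg.2 hj_le)]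

end FrequencyBounds

theorem sub_le_mul_sub_of_hasDerivAt_le {f f' : ℝ → ℝ} {a b C : ℝ} (hab : a ≤ b)
    (hf : ∀ t ∈ Icc a b, HasDerivAt f (f' t) t) (hC : ∀ t ∈ Icc a b, f' t ≤ C) :
    f b - f a ≤ C * (b - a) := by
  refine Convex.image_sub_le_mul_sub_of_deriv_le (convex_Icc a b)
    (fun t ht => (hf t ht).continuousAt.continuousWithinAt)
    (fun t ht => (hf t (interior_subset ht)).differentiableAt.differentiableWithinAt)
    (fun t ht => ?_) a (left_mem_Icc.2 hab) b (right_mem_Icc.2 hab) hab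
  rw [(hf t (interior_subset ht)).deriv]
  exact hC t (interior_subset ht)

theorem mul_sub_le_sub_of_le_hasDerivAt {f f' : ℝ → ℝ} {a b C : ℝ} (hab : a ≤ b)
    (hf : ∀ t ∈ Icc a b, HasDerivAt f (f' t) t) (hC : ∀ t ∈ Icc a b, C ≤ f' t) :
    C * (b - a) ≤ f b - f a := by
  have hneg := sub_le_mul_sub_of_hasDerivAt_le hab (fun t ht => (hf t ht).fun_neg)
    (fun t ht => neg_le_neg (hC t ht))
  linarith

/-- The exponent of the innermost of three radii in the three-balls inequality of a frequency
system with constant `A`, where `δ₁` and `δ₂` are the logarithmic distances from the middle radius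
to the inner and to the outer one. -/
noncomputable def frequencyExponent (A δ₁ δ₂ : ℝ) : ℝ :=
  δ₂ * exp (-(2 * A * δ₂)) / (δ₁ * exp (2 * A * δ₁) + δ₂ * exp (-(2 * A * δ₂)))

theorem frequencyExponent_mem_Ioo (A : ℝ) {δ₁ δ₂ : ℝ} (h₁ : 0 < δ₁) (h₂ : 0 < δ₂) :
    frequencyExponent A δ₁ δ₂ ∈ Ioo 0 1 := by
  refine ⟨by unfold frequencyExponent; positivity, ?_⟩
  rw [frequencyExponent, div_lt_one (by positivity)]
  exact lt_add_of_pos_left _ (by positivity)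

/-- The weights that define `frequencyExponent` are the ones that eliminate `Λ`. -/
theorem le_convexComb_frequencyExponent {A B δ₁ δ₂ Λ x y z : ℝ} (h₁ : 0 < δ₁) (h₂ : 0 < δ₂)
    (hB : 0 ≤ B) (hxy : y - x ≤ δ₁ * (exp (2 * A * δ₁) * Λ))
    (hyz : δ₂ * (exp (-(2 * A * δ₂)) * Λ) - δ₂ * B ≤ z - y) :
    y ≤ frequencyExponent A δ₁ δ₂ * x + (1 - frequencyExponent A δ₁ δ₂) * z + δ₂ * B := by
  set v := δ₁ * exp (2 * A * δ₁)
  set w := δ₂ * exp (-(2 * A * δ₂))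
  have : 0 < v := by positivity
  have hw0 : 0 < w := by positivity
  have hθ : frequencyExponent A δ₁ δ₂ = w / (v + w) := rfl
  have hsum : w * (y - x) ≤ v * (z - y + δ₂ * B) := by
    calc w * (y - x) ≤ w * (v * Λ) := by gcongr; linarith
      _ = v * (w * Λ) := by ring
      _ ≤ v * (z - y + δ₂ * B) := by gcongr; linarith
  rw [hθ, one_sub_div (by positivity), add_sub_cancel_right, div_mul_eq_mul_div,
    div_mul_eq_mul_div, ← add_div, ← sub_le_iff_le_add, le_div_iff₀ (by positivity)]
  nlinarith [mul_nonneg hw0.le (mul_nonneg h₂.le hB)]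

namespace FrequencySystem

variable {A k a b c : ℝ} {h J P Z E : ℝ → ℝ} {I : Set ℝ}

theorem mono (H : FrequencySystem A k h J P Z E I) {I' : Set ℝ} (hI : I' ⊆ I) :
    FrequencySystem A k h J P Z E I' where
  hasDerivAt_height t ht := H.hasDerivAt_height t (hI ht)
  hasDerivAt_energy t ht := H.hasDerivAt_energy t (hI ht)
  bounds t ht := H.bounds t (hI ht)

theorem add_height (H : FrequencySystem A k h J P Z E I) (hA : 0 ≤ A) (hk : 0 ≤ k) {ε : ℝ}
    (hε : 0 ≤ ε) : FrequencySystem A k (fun t => h t + ε) J P Z E I where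
  hasDerivAt_height t ht := (H.hasDerivAt_height t ht).add_const ε
  hasDerivAt_energy := H.hasDerivAt_energy
  bounds t ht := (H.bounds t ht).add_height hA hk hε

theorem exp_mul_frequency_le (H : FrequencySystem A k h J P Z E (Icc a b)) (hA : 0 ≤ A)
    (hk : 1 ≤ k) (hpos : ∀ t ∈ Icc a b, 0 < h t) (hab : a ≤ b) :
    exp (2 * A * a) * (P a / h a + (4 * A + 1) * k) ≤
      exp (2 * A * b) * (P b / h b + (4 * A + 1) * k) := by
  have hderiv : ∀ t ∈ Icc a b,
      HasDerivAt (fun t => exp (2 * A * t) * (P t / h t + (4 * A + 1) * k))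
        (exp (2 * A * t) * (2 * A * (P t / h t + (4 * A + 1) * k) +
          ((Z t + E t) * h t - P t * J t) / h t ^ 2)) t := fun t ht => by
    have hexp : HasDerivAt (fun t => exp (2 * A * t)) (exp (2 * A * t) * (2 * A)) t := by
      simpa using ((hasDerivAt_id t).const_mul (2 * A)).exp
    have hquot := (H.hasDerivAt_energy t ht).div (H.hasDerivAt_height t ht) (hpos t ht).ne'
    exact (hexp.mul (hquot.add_const ((4 * A + 1) * k))).congr_deriv (by
      simp only [Pi.div_apply]; ring)
  have hmono := mul_sub_le_sub_of_le_hasDerivAt (C := 0) hab hderiv fun t ht => by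
    have := (H.bounds t ht).neg_le_deriv_frequency hA hk (hpos t ht)
    exact mul_nonneg (exp_pos _).le (by linarith)
  linarith

theorem hasDerivAt_log_height (H : FrequencySystem A k h J P Z E I) (hpos : ∀ t ∈ I, 0 < h t) :
    ∀ t ∈ I, HasDerivAt (fun t => log (h t)) (J t / h t) t := fun t ht =>
  (H.hasDerivAt_height t ht).log (hpos t ht).ne'

theorem log_height_sub_le (H : FrequencySystem A k h J P Z E (Icc a b)) (hA : 0 ≤ A) (hk : 1 ≤ k)
    (hpos : ∀ t ∈ Icc a b, 0 < h t) (hab : a ≤ b) :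
    log (h b) - log (h a) ≤
      (b - a) * (exp (2 * A * (b - a)) * (P b / h b + (4 * A + 1) * k)) := by
  set Λ := P b / h b + (4 * A + 1) * k
  have hΛ : 0 ≤ Λ := by
    have := (H.bounds b (right_mem_Icc.2 hab)).neg_le_div (hpos b (right_mem_Icc.2 hab))
    nlinarith
  rw [mul_comm]
  refine sub_le_mul_sub_of_hasDerivAt_le hab (H.hasDerivAt_log_height hpos) fun t ht => ?_
  have hflux := (abs_le.1 ((H.bounds t ht).abs_div_sub_div_le (hpos t ht))).2
  have hfrequency : P t / h t + (4 * A + 1) * k ≤ exp (2 * A * (b - a)) * Λ := by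
    have hmono := (H.mono (Icc_subset_Icc_left ht.1)).exp_mul_frequency_le hA hk
      (fun τ hτ => hpos τ (Icc_subset_Icc_left ht.1 hτ)) ht.2
    calc P t / h t + (4 * A + 1) * k
        = exp (-(2 * A * t)) * (exp (2 * A * t) * (P t / h t + (4 * A + 1) * k)) := by
          rw [← mul_assoc, ← exp_add, neg_add_cancel, exp_zero, one_mul]
      _ ≤ exp (-(2 * A * t)) * (exp (2 * A * b) * Λ) := by gcongr
      _ = exp (2 * A * (b - t)) * Λ := by rw [← mul_assoc, ← exp_add]; ring_nf
      _ ≤ exp (2 * A * (b - a)) * Λ := by gcongr; exact ht.1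
  nlinarith

theorem le_log_height_sub (H : FrequencySystem A k h J P Z E (Icc b c)) (hA : 0 ≤ A) (hk : 1 ≤ k)
    (hpos : ∀ t ∈ Icc b c, 0 < h t) (hbc : b ≤ c) :
    (c - b) * (exp (-(2 * A * (c - b))) * (P b / h b + (4 * A + 1) * k)) -
      (c - b) * ((5 * A + 1) * k) ≤ log (h c) - log (h b) := by
  set Λ := P b / h b + (4 * A + 1) * k
  have hΛ : 0 ≤ Λ := by
    have := (H.bounds b (left_mem_Icc.2 hbc)).neg_le_div (hpos b (left_mem_Icc.2 hbc))
    nlinarith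
  rw [← mul_sub, mul_comm]
  refine mul_sub_le_sub_of_le_hasDerivAt hbc (H.hasDerivAt_log_height hpos) fun t ht => ?_
  have hflux := (abs_le.1 ((H.bounds t ht).abs_div_sub_div_le (hpos t ht))).1
  have hfrequency : exp (-(2 * A * (c - b))) * Λ ≤ P t / h t + (4 * A + 1) * k := by
    have hmono := (H.mono (Icc_subset_Icc_right ht.2)).exp_mul_frequency_le hA hk
      (fun τ hτ => hpos τ (Icc_subset_Icc_right ht.2 hτ)) ht.1
    calc exp (-(2 * A * (c - b))) * Λ
        ≤ exp (-(2 * A * (t - b))) * Λ := by gcongr; exact ht.2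
      _ = exp (-(2 * A * t)) * (exp (2 * A * b) * Λ) := by
          rw [← mul_assoc, ← exp_add]; ring_nf
      _ ≤ exp (-(2 * A * t)) * (exp (2 * A * t) * (P t / h t + (4 * A + 1) * k)) := by gcongr
      _ = P t / h t + (4 * A + 1) * k := by
          rw [← mul_assoc, ← exp_add, neg_add_cancel, exp_zero, one_mul]
  nlinarith

theorem height_le_of_pos (H : FrequencySystem A k h J P Z E (Icc a c)) (hA : 0 ≤ A) (hk : 1 ≤ k)
    (hpos : ∀ t ∈ Icc a c, 0 < h t) (hab : a < b) (hbc : b < c) :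
    h b ≤ exp ((c - b) * ((5 * A + 1) * k)) * (h a ^ frequencyExponent A (b - a) (c - b) *
      h c ^ (1 - frequencyExponent A (b - a) (c - b))) := by
  have hleft : Icc a b ⊆ Icc a c := Icc_subset_Icc_right hbc.le
  have hright : Icc b c ⊆ Icc a c := Icc_subset_Icc_left hab.le
  have hlog := le_convexComb_frequencyExponent (sub_pos.2 hab) (sub_pos.2 hbc)
    (by positivity : 0 ≤ (5 * A + 1) * k)
    ((H.mono hleft).log_height_sub_le hA hk (fun t ht => hpos t (hleft ht)) hab.le)
    ((H.mono hright).le_log_height_sub hA hk (fun t ht => hpos t (hright ht)) hbc.le)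
  have ha : 0 < h a := hpos a (left_mem_Icc.2 (hab.trans hbc).le)
  have hc : 0 < h c := hpos c (right_mem_Icc.2 (hab.trans hbc).le)
  rw [rpow_def_of_pos ha, rpow_def_of_pos hc, ← exp_add, ← exp_add,
    ← log_le_iff_le_exp (hpos b ⟨hab.le, hbc.le⟩)]
  linarith

theorem height_le (H : FrequencySystem A k h J P Z E (Icc a c)) (hA : 0 ≤ A) (hk : 1 ≤ k)
    (hab : a < b) (hbc : b < c) :
    h b ≤ exp ((c - b) * ((5 * A + 1) * k)) * (h a ^ frequencyExponent A (b - a) (c - b) *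
      h c ^ (1 - frequencyExponent A (b - a) (c - b))) := by
  obtain ⟨hθ0, hθ1⟩ := frequencyExponent_mem_Ioo A (sub_pos.2 hab) (sub_pos.2 hbc)
  set θ := frequencyExponent A (b - a) (c - b)
  have hrhs : Continuous fun ε => exp ((c - b) * ((5 * A + 1) * k)) *
      ((h a + ε) ^ θ * (h c + ε) ^ (1 - θ)) :=
    continuous_const.mul (((continuous_const.add continuous_id).rpow_const fun _ => .inr hθ0.le).mul
      ((continuous_const.add continuous_id).rpow_const fun _ => .inr (sub_nonneg.2 hθ1.le)))
  have hlim := le_of_tendsto_of_tendsto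
    ((by fun_prop : Continuous fun ε => h b + ε).continuousWithinAt (s := Ioi 0) (x := 0))
    hrhs.continuousWithinAt
    (eventually_nhdsWithin_of_forall fun ε hε => (H.add_height hA (by linarith)
      (le_of_lt hε)).height_le_of_pos hA hk
      (fun t ht => add_pos_of_nonneg_of_pos (H.bounds t ht).height_nonneg hε) hab hbc)
  simpa only [add_zero] using hlim

end FrequencySystem

/-! ### Frequency bounds for Helmholtz equations -/

section HelmholtzBounds

variable {n : ℕ} {x₀ : EuclideanSpace ℝ (Fin n)} {p u : EuclideanSpace ℝ (Fin n) → ℝ}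
  {A R k s : ℝ} {m : ℕ}

/-- `u` solves `Δu + p u = 0` on the closed ball of radius `R` about `x₀` up to a zeroth-order
error, where the potential `p` and its radial derivative are at most quadratic in the frequency
`k`. The bounds are normalised by `R ^ 2`, which makes the constant `A` scale invariant. -/
structure HelmholtzBounds (A k : ℝ) (x₀ : EuclideanSpace ℝ (Fin n)) (R : ℝ)
    (p u : EuclideanSpace ℝ (Fin n) → ℝ) : Prop where
  contDiffAt_potential : ∀ x ∈ closedBall x₀ R, ContDiffAt ℝ 1 p x
  contDiffAt : ∀ x ∈ closedBall x₀ R, ContDiffAt ℝ 2 u x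
  potential_le : ∀ x ∈ closedBall x₀ R, R ^ 2 * p x ≤ A * k ^ 2
  radialDeriv_potential_add_le :
    ∀ x ∈ closedBall x₀ R, R ^ 2 * (radialDeriv x₀ p x + 2 * p x) ≤ A * k ^ 2
  abs_helmholtz_le : ∀ x ∈ closedBall x₀ R, R ^ 2 * |helmholtz p u x| ≤ A * |u x|

namespace HelmholtzBounds

theorem of_abs_le {q : EuclideanSpace ℝ (Fin n) → ℝ} {Q V₀ R₀ : ℝ} (hQ : 0 ≤ Q)
    (hV₀ : 0 ≤ V₀) (hR : 0 ≤ R) (hRR₀ : R ≤ R₀)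
    (hq : ∀ x ∈ closedBall x₀ R, ContDiffAt ℝ 1 q x)
    (hqQ : ∀ x ∈ closedBall x₀ R, |q x| ≤ Q ∧ ‖gradient q x‖ ≤ Q)
    (hu : ∀ x ∈ closedBall x₀ R, ContDiffAt ℝ 2 u x)
    (hlap : ∀ x ∈ closedBall x₀ R, |lap u x + k ^ 2 * q x * u x| ≤ V₀ * |u x|) :
    HelmholtzBounds (R₀ ^ 2 * (Q * (R₀ + 2) + V₀)) k x₀ R (fun x => k ^ 2 * q x) u where
  contDiffAt_potential x hx := contDiffAt_const.mul (hq x hx)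
  contDiffAt := hu
  potential_le x hx := by
    have hR₀ : 0 ≤ R₀ := hR.trans hRR₀
    calc R ^ 2 * (k ^ 2 * q x) ≤ R ^ 2 * (k ^ 2 * Q) := by
          gcongr
          exact (le_abs_self _).trans (hqQ x hx).1
      _ ≤ R₀ ^ 2 * (k ^ 2 * Q) := by gcongr
      _ = R₀ ^ 2 * Q * k ^ 2 := by ring
      _ ≤ R₀ ^ 2 * (Q * (R₀ + 2) + V₀) * k ^ 2 := by
          gcongr
          nlinarith [mul_nonneg hQ hR₀]
  radialDeriv_potential_add_le x hx := by
    have hR₀ : 0 ≤ R₀ := hR.trans hRR₀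
    have hZq : radialDeriv x₀ q x ≤ Q * R₀ :=
      (radialDeriv_le_norm_gradient_mul x₀ q x).trans
        (mul_le_mul (hqQ x hx).2 ((mem_closedBall_iff_norm.1 hx).trans hRR₀) (norm_nonneg _) hQ)
    rw [radialDeriv_const_mul _ ((hq x hx).differentiableAt one_ne_zero)]
    calc R ^ 2 * (k ^ 2 * radialDeriv x₀ q x + 2 * (k ^ 2 * q x))
        = R ^ 2 * (k ^ 2 * (radialDeriv x₀ q x + 2 * q x)) := by ring
      _ ≤ R ^ 2 * (k ^ 2 * (Q * R₀ + 2 * Q)) := by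
          gcongr
          exact (le_abs_self _).trans (hqQ x hx).1
      _ ≤ R₀ ^ 2 * (k ^ 2 * (Q * R₀ + 2 * Q)) := by gcongr
      _ = R₀ ^ 2 * (Q * (R₀ + 2)) * k ^ 2 := by ring
      _ ≤ R₀ ^ 2 * (Q * (R₀ + 2) + V₀) * k ^ 2 := by
          gcongr
          exact le_add_of_nonneg_right hV₀
  abs_helmholtz_le x hx := by
    have hR₀ : 0 ≤ R₀ := hR.trans hRR₀
    calc R ^ 2 * |helmholtz (fun x => k ^ 2 * q x) u x| ≤ R₀ ^ 2 * (V₀ * |u x|) := by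
          gcongr
          exact hlap x hx
      _ = R₀ ^ 2 * V₀ * |u x| := by ring
      _ ≤ R₀ ^ 2 * (Q * (R₀ + 2) + V₀) * |u x| := by
          gcongr
          exact le_add_of_nonneg_left (by positivity)

theorem continuousOn (H : HelmholtzBounds A k x₀ R p u) : ContinuousOn u (closedBall x₀ R) :=
  fun x hx => (H.contDiffAt x hx).continuousAt.continuousWithinAt

theorem continuousOn_radialDeriv (H : HelmholtzBounds A k x₀ R p u) :
    ContinuousOn (radialDeriv x₀ u) (closedBall x₀ R) :=
  _root_.continuousOn_radialDeriv fun x hx => (H.contDiffAt x hx).of_le one_le_two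

theorem integral_abs_mul_radialDeriv_le (H : HelmholtzBounds A k x₀ R p u) (m : ℕ) (s : ℝ) :
    ∫ x, |u x * radialDeriv x₀ u x| ∂bumpMeasure x₀ R (m + 2) s ≤
      √(radialEnergy x₀ R m u s * height x₀ R m u s) := by
  rw [mul_comm]
  exact integral_abs_mul_le_sqrt (memLp_two_bumpMeasure H.continuousOn)
    (memLp_two_bumpMeasure H.continuousOn_radialDeriv)

theorem abs_flux_sub_energy_le (H : HelmholtzBounds A k x₀ R p u) (hA : 0 ≤ A) (hR : 0 ≤ R)
    (hs : s ≤ R ^ 2) :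
    |flux x₀ R m u s - energy x₀ R m p u s| ≤ A * height x₀ R m u s := by
  have hf := continuousOn_helmholtz H.contDiffAt_potential H.contDiffAt
  have hbound : ∫ x, |u x * helmholtz p u x| ∂bumpMeasure x₀ R (m + 3) s ≤
      A * height x₀ R m u s := by
    rw [height, ← integral_const_mul]
    refine integral_bumpMeasure_succ_le hs (H.continuousOn.mul hf).abs
      ((H.continuousOn.pow 2).const_mul A) (fun x _ => by positivity) fun x hx => ?_
    rw [abs_mul, ← sq_abs (u x)]
    linear_combination |u x| * H.abs_helmholtz_le x hx
  rw [flux_eq_energy_add H.contDiffAt_potential H.contDiffAt hR hs, add_sub_cancel_left, abs_div,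
    abs_of_pos (by positivity : (0 : ℝ) < 2 * (m + 3))]
  refine (div_le_self (abs_nonneg _) ?_).trans (abs_integral_le_integral_abs.trans hbound)
  linarith [Nat.cast_nonneg (α := ℝ) m]

theorem flux_sq_le (H : HelmholtzBounds A k x₀ R p u) (m : ℕ) (s : ℝ) :
    flux x₀ R m u s ^ 2 ≤ radialEnergy x₀ R m u s * height x₀ R m u s := by
  have hZh : 0 ≤ radialEnergy x₀ R m u s * height x₀ R m u s :=
    mul_nonneg (integral_nonneg fun _ => sq_nonneg _) (integral_nonneg fun _ => sq_nonneg _)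
  rw [← sq_abs, ← le_sqrt (abs_nonneg _) hZh]
  exact abs_integral_le_integral_abs.trans (H.integral_abs_mul_radialDeriv_le m s)

theorem neg_le_energy (H : HelmholtzBounds A k x₀ R p u) (hA : 0 ≤ A) (hk : 0 ≤ k) (hkm : k ≤ m)
    (hs : s ≤ R ^ 2) : -(A * (k * height x₀ R m u s)) ≤ energy x₀ R m p u s := by
  have hbound : ∫ x, -energyDensity p u x ∂bumpMeasure x₀ R (m + 3) s ≤
      A * k ^ 2 * height x₀ R m u s := by
    rw [height, ← integral_const_mul]
    refine integral_bumpMeasure_succ_le hs (fun x hx => ((contDiffAt_energyDensity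
      H.contDiffAt_potential H.contDiffAt x hx).continuousAt.neg).continuousWithinAt)
      ((H.continuousOn.pow 2).const_mul _) (fun x _ => by positivity) fun x hx => ?_
    have hgrad : 0 ≤ R ^ 2 * ∑ j, pderiv' j u x ^ 2 := by positivity
    rw [energyDensity]
    linear_combination hgrad + u x ^ 2 * H.potential_le x hx
  have hheight : 0 ≤ A * k * height x₀ R m u s :=
    mul_nonneg (by positivity) (integral_nonneg fun _ => sq_nonneg _)
  rw [integral_neg] at hbound
  rw [energy, le_div_iff₀ (by positivity)]
  nlinarith

theorem neg_le_energyError (H : HelmholtzBounds A k x₀ R p u) (hA : 0 ≤ A) (hk : 0 ≤ k)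
    (hkm : k ≤ m) (hs : s ≤ R ^ 2) :
    -(A * (k * height x₀ R m u s + √(radialEnergy x₀ R m u s * height x₀ R m u s))) ≤
      energyError x₀ R m p u s := by
  have hu := H.continuousOn
  have hZu := H.continuousOn_radialDeriv
  have hbound : ∫ x, energyErrorDensity x₀ p u x ∂bumpMeasure x₀ R (m + 3) s ≤
      A * k ^ 2 * height x₀ R m u s +
        2 * A * √(radialEnergy x₀ R m u s * height x₀ R m u s) := by
    calc ∫ x, energyErrorDensity x₀ p u x ∂bumpMeasure x₀ R (m + 3) s
        ≤ ∫ x, (A * k ^ 2 * u x ^ 2 + 2 * A * |u x * radialDeriv x₀ u x|)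
            ∂bumpMeasure x₀ R (m + 2) s := by
          refine integral_bumpMeasure_succ_le hs
            (continuousOn_energyErrorDensity H.contDiffAt_potential H.contDiffAt)
            (by fun_prop) (fun x _ => by positivity) fun x hx => ?_
          have herror : R ^ 2 * (helmholtz p u x * radialDeriv x₀ u x) ≤
              A * |u x| * |radialDeriv x₀ u x| := by
            calc R ^ 2 * (helmholtz p u x * radialDeriv x₀ u x)
                ≤ R ^ 2 * (|helmholtz p u x| * |radialDeriv x₀ u x|) := by
                  rw [← abs_mul]; gcongr; exact le_abs_self _
              _ ≤ A * |u x| * |radialDeriv x₀ u x| := by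
                  rw [← mul_assoc]
                  exact mul_le_mul_of_nonneg_right (H.abs_helmholtz_le x hx) (abs_nonneg _)
          rw [energyErrorDensity, abs_mul]
          linear_combination u x ^ 2 * H.radialDeriv_potential_add_le x hx + 2 * herror
      _ = A * k ^ 2 * height x₀ R m u s +
            2 * A * ∫ x, |u x * radialDeriv x₀ u x| ∂bumpMeasure x₀ R (m + 2) s := by
          rw [integral_add (integrable_bumpMeasure (by fun_prop))
            (integrable_bumpMeasure (by fun_prop)), integral_const_mul, integral_const_mul, height]
      _ ≤ _ := by gcongr; exact H.integral_abs_mul_radialDeriv_le m s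
  have hheight : 0 ≤ A * k * height x₀ R m u s :=
    mul_nonneg (by positivity) (integral_nonneg fun _ => sq_nonneg _)
  have hsqrt : 0 ≤ A * √(radialEnergy x₀ R m u s * height x₀ R m u s) := by positivity
  rw [energyError, le_div_iff₀ (by positivity)]
  nlinarith

theorem frequencyBounds (H : HelmholtzBounds A k x₀ R p u) (hA : 0 ≤ A) (hk : 0 ≤ k)
    (hkm : k ≤ m) (hR : 0 ≤ R) (hs : s ≤ R ^ 2) :
    FrequencyBounds A k (height x₀ R m u s) (flux x₀ R m u s) (energy x₀ R m p u s)
      (radialEnergy x₀ R m u s) (energyError x₀ R m p u s) where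
  height_nonneg := integral_nonneg fun _ => sq_nonneg _
  radialEnergy_nonneg := integral_nonneg fun _ => sq_nonneg _
  abs_flux_sub_energy_le := H.abs_flux_sub_energy_le hA hR hs
  flux_sq_le := H.flux_sq_le m s
  neg_le_energyError := H.neg_le_energyError hA hk hkm hs
  neg_le_energy := H.neg_le_energy hA hk hkm hs

theorem frequencySystem (H : HelmholtzBounds A k x₀ R p u) (hA : 0 ≤ A) (hk : 0 ≤ k)
    (hkm : k ≤ m) (hR : 0 ≤ R) {I : Set ℝ} (hI : ∀ t ∈ I, exp t ≤ R ^ 2) :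
    FrequencySystem A k
      (fun t => exp (-((m + 2 + n / 2) * t)) * height x₀ R m u (exp t))
      (fun t => exp (-((m + 2 + n / 2) * t)) * flux x₀ R m u (exp t))
      (fun t => exp (-((m + 2 + n / 2) * t)) * energy x₀ R m p u (exp t))
      (fun t => exp (-((m + 2 + n / 2) * t)) * radialEnergy x₀ R m u (exp t))
      (fun t => exp (-((m + 2 + n / 2) * t)) * energyError x₀ R m p u (exp t)) I where
  hasDerivAt_height t ht := hasDerivAt_exp_mul_height hR (hI t ht)
    fun x hx => (H.contDiffAt x hx).of_le one_le_two
  hasDerivAt_energy t ht := by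
    rw [← mul_add]
    exact hasDerivAt_exp_mul_energy H.contDiffAt_potential H.contDiffAt hR (hI t ht)
  bounds t ht := (H.frequencyBounds hA hk hkm hR (hI t ht)).const_mul (exp_pos _).le

end HelmholtzBounds
end HelmholtzBounds

/-! ### From heights to balls -/

section ThreeBalls

variable {n : ℕ} {x₀ : EuclideanSpace ℝ (Fin n)} {p u : EuclideanSpace ℝ (Fin n) → ℝ}
  {A R k s r ρ : ℝ} {m : ℕ}

theorem exp_neg_mul_log (d : ℝ) (m : ℕ) (hs : 0 < s) :
    exp (-((m + 2 + d) * log s)) = exp (-(d * log s)) * (s ^ (m + 2))⁻¹ := by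
  rw [add_mul, neg_add_rev, exp_add, exp_neg ((m + 2) * log s),
    show (m : ℝ) + 2 = (m + 2 : ℕ) by push_cast; rfl, exp_nat_mul, exp_log hs]

theorem exp_mul_height_le (hu : ContinuousOn u (closedBall x₀ R)) (hρ : 0 < ρ) (hρR : ρ ≤ R) :
    exp (-((m + 2 + n / 2) * log (ρ ^ 2))) * height x₀ R m u (ρ ^ 2) ≤
      exp (-(n / 2 * log (ρ ^ 2))) * ∫ x in ball x₀ ρ, u x ^ 2 := by
  rw [exp_neg_mul_log _ m (by positivity), mul_assoc]
  refine mul_le_mul_of_nonneg_left ?_ (exp_pos _).le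
  rw [inv_mul_le_iff₀ (by positivity)]
  exact integral_bumpMeasure_le_setIntegral_ball hρ.le hρR (hu.pow 2) fun x _ => sq_nonneg (u x)

theorem le_exp_mul_height (hu : ContinuousOn u (closedBall x₀ R)) (hρR : ρ ≤ R) (hs : 0 < s)
    (hρs : ρ ^ 2 ≤ s) :
    exp (-(n / 2 * log s)) * ((1 - ρ ^ 2 / s) ^ (m + 2) * ∫ x in ball x₀ ρ, u x ^ 2) ≤
      exp (-((m + 2 + n / 2) * log s)) * height x₀ R m u s := by
  rw [exp_neg_mul_log _ m hs, mul_assoc]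
  refine mul_le_mul_of_nonneg_left ?_ (exp_pos _).le
  rw [le_inv_mul_iff₀ (by positivity), ← mul_assoc, ← mul_pow, mul_one_sub,
    mul_div_cancel₀ _ hs.ne']
  exact setIntegral_ball_le_integral_bumpMeasure hρR hρs (hu.pow 2) fun x _ => sq_nonneg (u x)

theorem le_of_exp_mul_le_rpow_mul_rpow {a b c d θ K x y z : ℝ} (hx : 0 ≤ x) (hz : 0 ≤ z)
    (h : exp (-(d * b)) * y ≤
      K * ((exp (-(d * a)) * x) ^ θ * (exp (-(d * c)) * z) ^ (1 - θ))) :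
    y ≤ K * exp (d * (θ * (b - a) - (1 - θ) * (c - b))) * (x ^ θ * z ^ (1 - θ)) := by
  rw [mul_rpow (exp_pos _).le hx, mul_rpow (exp_pos _).le hz, ← exp_mul, ← exp_mul] at h
  calc y = exp (d * b) * (exp (-(d * b)) * y) := by
        rw [← mul_assoc, ← exp_add, add_neg_cancel, exp_zero, one_mul]
    _ ≤ exp (d * b) * (K * (exp (-(d * a) * θ) * x ^ θ *
          (exp (-(d * c) * (1 - θ)) * z ^ (1 - θ)))) := by gcongr
    _ = K * (exp (d * b) * exp (-(d * a) * θ) * exp (-(d * c) * (1 - θ))) *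
          (x ^ θ * z ^ (1 - θ)) := by ring
    _ = _ := by rw [← exp_add, ← exp_add]; ring_nf

theorem rpow_le_mul_rpow_rpow_mul_rpow_rpow {K x y z θ β : ℝ} (hx : 0 ≤ x) (hy : 0 ≤ y)
    (hz : 0 ≤ z) (hK : 0 ≤ K) (hβ : 0 ≤ β) (h : y ≤ K * (x ^ θ * z ^ (1 - θ))) :
    y ^ β ≤ K ^ β * (z ^ β) ^ (1 - θ) * (x ^ β) ^ θ := by
  refine (rpow_le_rpow hy h hβ).trans_eq ?_
  rw [mul_rpow hK (by positivity), mul_rpow (by positivity) (by positivity), ← rpow_mul hx,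
    ← rpow_mul hz, ← rpow_mul hx, ← rpow_mul hz, mul_comm β, mul_comm β]
  ring

/-- The exponent of the three-balls inequality for radii `r / 2`, `r`, `2 * r`. The height is
evaluated at the squared radii `(r / 2) ^ 2`, `2 * r ^ 2`, `(2 * r) ^ 2`, the middle one being
enlarged so that its weight is bounded below on the ball of radius `r`. -/
noncomputable def threeBallsExponent (A : ℝ) : ℝ := frequencyExponent A (log 8) (log 2)

theorem threeBallsExponent_mem_Ioo (A : ℝ) : threeBallsExponent A ∈ Ioo 0 1 :=
  frequencyExponent_mem_Ioo A (log_pos (by norm_num)) (log_pos one_lt_two)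

theorem HelmholtzBounds.pow_mul_integral_sq_ball_le (H : HelmholtzBounds A k x₀ (2 * r) p u)
    (hA : 0 ≤ A) (hk : 1 ≤ k) (hkm : k ≤ m) (hr : 0 < r) :
    (1 / 2) ^ (m + 2) * ∫ x in ball x₀ r, u x ^ 2 ≤
      exp (log 2 * ((5 * A + 1) * k)) *
          exp (n / 2 * (threeBallsExponent A * log 8 - (1 - threeBallsExponent A) * log 2)) *
        ((∫ x in ball x₀ (r / 2), u x ^ 2) ^ threeBallsExponent A *
          (∫ x in ball x₀ (2 * r), u x ^ 2) ^ (1 - threeBallsExponent A)) := by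
  obtain ⟨hθ0, hθ1⟩ := threeBallsExponent_mem_Ioo A
  set θ := threeBallsExponent A with hθ
  have hinner : log (2 * r ^ 2) - log ((r / 2) ^ 2) = log 8 := by
    rw [← log_div (by positivity) (by positivity),
      show 2 * r ^ 2 / (r / 2) ^ 2 = 8 by field_simp; norm_num]
  have houter : log ((2 * r) ^ 2) - log (2 * r ^ 2) = log 2 := by
    rw [← log_div (by positivity) (by positivity),
      show (2 * r) ^ 2 / (2 * r ^ 2) = 2 by field_simp]
  have hlog2 : 0 < log 2 := log_pos one_lt_two
  have hlog8 : 0 < log 8 := log_pos (by norm_num)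
  have hfreq := (H.frequencySystem hA (by linarith) hkm (by positivity)
    (I := Icc (log ((r / 2) ^ 2)) (log ((2 * r) ^ 2))) fun t ht =>
      (le_log_iff_exp_le (by positivity)).1 ht.2).height_le hA hk
    (b := log (2 * r ^ 2)) (by linarith) (by linarith)
  rw [hinner, houter, exp_log (by positivity), exp_log (by positivity),
    exp_log (by positivity), ← threeBallsExponent, ← hθ] at hfreq
  have hmiddle := le_exp_mul_height (m := m) (ρ := r) H.continuousOn (by linarith)
    (by positivity : 0 < 2 * r ^ 2) (by nlinarith)
  rw [show 1 - r ^ 2 / (2 * r ^ 2) = 1 / 2 by field_simp; norm_num] at hmiddle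
  rw [← hinner, ← houter]
  refine le_of_exp_mul_le_rpow_mul_rpow (integral_nonneg fun x => sq_nonneg _)
    (integral_nonneg fun x => sq_nonneg _) ((hmiddle.trans hfreq).trans ?_)
  rw [houter]
  have hheight (t s : ℝ) : 0 ≤ exp t * height x₀ (2 * r) m u s :=
    mul_nonneg (exp_pos _).le (integral_nonneg fun _ => sq_nonneg _)
  have hinner_le := exp_mul_height_le (m := m) H.continuousOn (half_pos hr) (by linarith)
  have houter_le := exp_mul_height_le (m := m) H.continuousOn (by positivity) le_rfl
  have : 0 ≤ 1 - θ := sub_nonneg.2 hθ1.le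
  gcongr
  exacts [rpow_nonneg (hheight _ _) _, hheight _ _, hheight _ _]

theorem HelmholtzBounds.integral_sq_ball_le (H : HelmholtzBounds A k x₀ (2 * r) p u) (hA : 0 ≤ A)
    (hk : 1 ≤ k) (hr : 0 < r) :
    ∫ x in ball x₀ r, u x ^ 2 ≤ exp ((5 * A + 5 + 2 * n) * k) *
      ((∫ x in ball x₀ (r / 2), u x ^ 2) ^ threeBallsExponent A *
        (∫ x in ball x₀ (2 * r), u x ^ 2) ^ (1 - threeBallsExponent A)) := by
  have hlog8 : log 8 = 3 * log 2 := by
    rw [show (8 : ℝ) = 2 ^ 3 by norm_num, log_pow, Nat.cast_ofNat]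
  obtain ⟨-, hθ1⟩ := threeBallsExponent_mem_Ioo A
  have hpow := H.pow_mul_integral_sq_ball_le hA hk (Nat.le_ceil k) hr
  have hm := Nat.ceil_lt_add_one (zero_le_one.trans hk)
  set m := ⌈k⌉₊
  set θ := threeBallsExponent A
  have hexponent : (m + 2 : ℕ) * log 2 + (log 2 * ((5 * A + 1) * k) +
      n / 2 * (θ * log 8 - (1 - θ) * log 2)) ≤ (5 * A + 5 + 2 * n) * k := by
    have hθ_le : n / 2 * (θ * log 8 - (1 - θ) * log 2) ≤ 2 * n * log 2 := by
      rw [hlog8]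
      have : n * log 2 * θ ≤ n * log 2 * 1 := by gcongr
      nlinarith
    calc _ ≤ ((m + 2 : ℕ) + (5 * A + 1) * k + 2 * n) * log 2 := by linarith
      _ ≤ ((m + 2 : ℕ) + (5 * A + 1) * k + 2 * n) * 1 := by
        gcongr
        exact log_two_lt_d9.le.trans (by norm_num)
      _ ≤ (5 * A + 5 + 2 * n) * k := by
        have : 2 * (n : ℝ) * 1 ≤ 2 * n * k := by gcongr
        push_cast
        linarith
  have htwo : 2 ^ (m + 2) = exp ((m + 2 : ℕ) * log 2) := by
    rw [exp_nat_mul, exp_log two_pos]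
  rw [one_div, inv_pow, inv_mul_le_iff₀ (by positivity), htwo, ← exp_add, ← mul_assoc,
    ← exp_add] at hpow
  refine hpow.trans (mul_le_mul_of_nonneg_right (exp_le_exp.2 hexponent) ?_)
  have hball_nonneg (ρ : ℝ) : 0 ≤ ∫ x in ball x₀ ρ, u x ^ 2 := integral_nonneg fun _ => sq_nonneg _
  exact mul_nonneg (rpow_nonneg (hball_nonneg _) _) (rpow_nonneg (hball_nonneg _) _)

end ThreeBalls

theorem three_balls_inequality_frequency_general (n : ℕ) (R₀ Q V₀ : ℝ) :
    ∃ α ∈ Ioo (0 : ℝ) 1, ∃ C > (1 : ℝ),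
      ∀ Ω : Set (EuclideanSpace ℝ (Fin n)), IsOpen Ω →
      ∀ q : EuclideanSpace ℝ (Fin n) → ℝ,
        ContDiffOn ℝ 1 q Ω →
        (∀ x ∈ Ω, |q x| ≤ Q ∧ ‖gradient q x‖ ≤ Q) →
      ∀ k : ℝ, 1 ≤ k →
      ∀ u : EuclideanSpace ℝ (Fin n) → ℝ,
        ContDiffOn ℝ 2 u Ω →
        (∀ x ∈ Ω, |lap u x + k ^ 2 * q x * u x| ≤ V₀ * |u x|) →
      ∀ (x₀ : EuclideanSpace ℝ (Fin n)) (r : ℝ), 0 < r → 2 * r ≤ R₀ →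
        closedBall x₀ (2 * r) ⊆ Ω →
        (∫ x in ball x₀ r, (u x) ^ 2) ^ ((1 : ℝ) / 2)
          ≤ C * exp (C * k)
            * ((∫ x in ball x₀ (2 * r), (u x) ^ 2) ^ ((1 : ℝ) / 2)) ^ (1 - α)
            * ((∫ x in ball x₀ (r / 2), (u x) ^ 2) ^ ((1 : ℝ) / 2)) ^ α := by
  set A := |R₀| ^ 2 * (|Q| * (|R₀| + 2) + |V₀|)
  have hA : 0 ≤ A := by positivity
  have hC : 1 < 5 * A + 5 + 2 * n := by linarith [Nat.cast_nonneg (α := ℝ) n]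
  refine ⟨threeBallsExponent A, threeBallsExponent_mem_Ioo A, 5 * A + 5 + 2 * n, hC, ?_⟩
  intro Ω hΩ q hq hqQ k hk u hu hlap x₀ r hr hrR₀ hsub
  have hbounds : HelmholtzBounds A k x₀ (2 * r) (fun x => k ^ 2 * q x) u :=
    .of_abs_le (abs_nonneg Q) (abs_nonneg V₀) (by positivity) (hrR₀.trans (le_abs_self R₀))
      (fun x hx => hq.contDiffAt (hΩ.mem_nhds (hsub hx)))
      (fun x hx => (hqQ x (hsub hx)).imp (·.trans (le_abs_self Q)) (·.trans (le_abs_self Q)))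
      (fun x hx => hu.contDiffAt (hΩ.mem_nhds (hsub hx)))
      (fun x hx => (hlap x (hsub hx)).trans
        (mul_le_mul_of_nonneg_right (le_abs_self V₀) (abs_nonneg _)))
  have hball_nonneg (ρ : ℝ) : 0 ≤ ∫ x in ball x₀ ρ, u x ^ 2 := integral_nonneg fun _ => sq_nonneg _
  refine (rpow_le_mul_rpow_rpow_mul_rpow_rpow (hball_nonneg _) (hball_nonneg _) (hball_nonneg _)
    (exp_pos _).le one_half_pos.le (hbounds.integral_sq_ball_le hA hk hr)).trans ?_
  gcongr
  calc exp ((5 * A + 5 + 2 * n) * k) ^ (1 / 2 : ℝ) ≤ exp ((5 * A + 5 + 2 * n) * k) :=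
        rpow_le_self_of_one_le (one_le_exp (by positivity)) (by norm_num)
    _ ≤ _ := le_mul_of_one_le_left (exp_pos _).le hC.le

theorem two_mul_radius_le_diam {E : Type*} [NormedAddCommGroup E] [NormedSpace ℝ E] [Nontrivial E]
    {Ω : Set E} (hΩ : Bornology.IsBounded Ω) {x₀ : E} {r : ℝ} (hr : 0 ≤ r)
    (hsub : closedBall x₀ r ⊆ Ω) : 2 * r ≤ diam Ω := by
  rw [← diam_closedBall_eq x₀ hr]
  exact diam_mono hsub hΩ

/-- Three-balls inequality with explicit frequency dependence (Lemma 2.3, interior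
version). -/
theorem three_balls_inequality_frequency (n : ℕ) (hn : 2 ≤ n)
    (Ω : Set (EuclideanSpace ℝ (Fin n))) (hΩo : IsOpen Ω) (hΩb : Bornology.IsBounded Ω)
    (κ Q V₀ : ℝ) (hκ : 1 < κ) :
    ∃ α ∈ Set.Ioo (0 : ℝ) 1, ∃ C > (1 : ℝ),
      ∀ q V : EuclideanSpace ℝ (Fin n) → ℝ,
        ContDiffOn ℝ 1 q Ω →
        (∀ x ∈ Ω, κ⁻¹ < q x ∧ q x < κ) →
        (∀ x ∈ Ω, |q x| ≤ Q ∧ ‖gradient q x‖ ≤ Q) →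
        Measurable V →
        (∀ x ∈ Ω, |V x| ≤ V₀) →
      ∀ k : ℝ, 1 ≤ k →
      ∀ u : EuclideanSpace ℝ (Fin n) → ℝ,
        ContDiffOn ℝ 2 u Ω →
        (∀ x ∈ Ω, lap u x + k ^ 2 * q x * u x + V x * u x = 0) →
      ∀ (x₀ : EuclideanSpace ℝ (Fin n)) (r : ℝ), 0 < r →
        Metric.closedBall x₀ (4 * r) ⊆ Ω →
        (∫ x in Metric.ball x₀ r, (u x) ^ 2) ^ ((1 : ℝ) / 2)
          ≤ C * Real.exp (C * k)
            * ((∫ x in Metric.ball x₀ (2 * r), (u x) ^ 2) ^ ((1 : ℝ) / 2)) ^ (1 - α)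
            * ((∫ x in Metric.ball x₀ (r / 2), (u x) ^ 2) ^ ((1 : ℝ) / 2)) ^ α := by
  obtain ⟨α, hα, C, hC, hgeneral⟩ := three_balls_inequality_frequency_general n (diam Ω) Q V₀
  refine ⟨α, hα, C, hC, fun q V hq _ hqQ _ hV k hk u hu heq x₀ r hr hsub => ?_⟩
  have hsub₂ : closedBall x₀ (2 * r) ⊆ Ω :=
    (closedBall_subset_closedBall (by linarith)).trans hsub
  have hdiam : 2 * r ≤ diam Ω := by
    have : NeZero n := ⟨by lia⟩
    exact two_mul_radius_le_diam hΩb hr.le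
      ((closedBall_subset_closedBall (by linarith)).trans hsub₂)
  refine hgeneral Ω hΩo q hq hqQ k hk u hu (fun x hx => ?_) x₀ r hr hdiam hsub₂
  rw [eq_neg_of_add_eq_zero_left (heq x hx), abs_neg, abs_mul]
  exact mul_le_mul_of_nonneg_right (hV x hx) (abs_nonneg _)
end

section
/- Iteration lemma for three-balls chains (used in Step 2 of the proof of Proposition 2.1): Let α ∈ (0,1), K ≥ 1, M > 0, N ∈ ℕ, and let a₀, a₁, …, a_N be nonnegative real numbers such that aⱼ ≤ M for all j and a_{j+1} ≤ K aⱼ^α M^{1-α} for all 0 ≤ j < N. Then a_N ≤ K^{1/(1-α)} a₀^{α^N} M^{1-α^N}. -/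
open Real

/-!
Writing `C = K * M ^ (1 - α)`, the recursion is `a (j + 1) ≤ C * a j ^ α`; raising to the power `α`
at each step gives `a N ≤ C ^ (1 + α + ⋯ + α ^ (N - 1)) * a 0 ^ (α ^ N)`. The geometric sum `S` in
the exponent satisfies `(1 - α) * S = 1 - α ^ N`, which yields the exact power of `M`, and for
`α < 1` it is at most `1 / (1 - α)`, which bounds the power of `K ≥ 1`.
-/

theorem le_rpow_geom_sum_mul_rpow_of_le_mul_rpow {α C : ℝ} (hα : 0 ≤ α) (hC : 0 ≤ C) {a : ℕ → ℝ}
    {N : ℕ} (ha : ∀ j < N, 0 ≤ a j) (hrec : ∀ j < N, a (j + 1) ≤ C * a j ^ α) :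
    a N ≤ C ^ (∑ i ∈ Finset.range N, α ^ i) * a 0 ^ (α ^ N) := by
  induction N with
  | zero => simp
  | succ n ih =>
    have ha₀ : 0 ≤ a 0 := ha 0 n.succ_pos
    have han : 0 ≤ a n := ha n n.lt_succ_self
    have hle : a n ≤ C ^ (∑ i ∈ Finset.range n, α ^ i) * a 0 ^ (α ^ n) :=
      ih (fun j hj => ha j (hj.trans n.lt_succ_self)) fun j hj => hrec j (hj.trans n.lt_succ_self)
    calc a (n + 1) ≤ C * a n ^ α := hrec n n.lt_succ_self
      _ ≤ C * (C ^ (∑ i ∈ Finset.range n, α ^ i) * a 0 ^ (α ^ n)) ^ α := by gcongr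
      _ = C * C ^ ((∑ i ∈ Finset.range n, α ^ i) * α) * a 0 ^ (α ^ n * α) := by
        rw [mul_rpow (by positivity) (by positivity), ← rpow_mul hC, ← rpow_mul ha₀, mul_assoc]
      _ = C ^ (∑ i ∈ Finset.range (n + 1), α ^ i) * a 0 ^ (α ^ (n + 1)) := by
        rw [← rpow_one_add' hC (by positivity), geom_sum_succ, pow_succ, mul_comm α, add_comm 1]

theorem rpow_geom_sum_le_rpow_one_div_one_sub {α K : ℝ} (hα₀ : 0 ≤ α) (hα₁ : α < 1) (hK : 1 ≤ K)
    (n : ℕ) : K ^ (∑ i ∈ Finset.range n, α ^ i) ≤ K ^ (1 / (1 - α)) := by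
  have hsum : ∑ i ∈ Finset.range n, α ^ i ≤ 1 / (1 - α) := by
    simpa only [Finset.range_eq_Ico, pow_zero] using
      geom_sum_Ico_le_of_lt_one (m := 0) (n := n) hα₀ hα₁
  exact rpow_le_rpow_of_exponent_le hK hsum

theorem three_balls_iteration_general {α K M : ℝ} (hα : 0 ≤ α) (hK : 0 ≤ K) (hM : 0 < M) {N : ℕ}
    {a : ℕ → ℝ} (ha : ∀ j < N, 0 ≤ a j)
    (hrec : ∀ j < N, a (j + 1) ≤ K * a j ^ α * M ^ (1 - α)) :
    a N ≤ K ^ (∑ i ∈ Finset.range N, α ^ i) * a 0 ^ (α ^ N) * M ^ (1 - α ^ N) := by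
  have hrec' : ∀ j < N, a (j + 1) ≤ K * M ^ (1 - α) * a j ^ α := fun j hj =>
    (hrec j hj).trans_eq (mul_right_comm _ _ _)
  calc a N ≤ (K * M ^ (1 - α)) ^ (∑ i ∈ Finset.range N, α ^ i) * a 0 ^ (α ^ N) :=
        le_rpow_geom_sum_mul_rpow_of_le_mul_rpow hα (by positivity) ha hrec'
    _ = K ^ (∑ i ∈ Finset.range N, α ^ i) * a 0 ^ (α ^ N) * M ^ (1 - α ^ N) := by
      rw [mul_rpow hK (by positivity), ← rpow_mul hM.le, mul_neg_geom_sum, mul_right_comm]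

/-- Iteration lemma for three-balls chains (used in Step 2 of the proof of
Proposition 2.1). -/
theorem three_balls_iteration (α K M : ℝ) (hα : α ∈ Set.Ioo (0 : ℝ) 1) (hK : 1 ≤ K)
    (hM : 0 < M) (N : ℕ) (a : ℕ → ℝ)
    (ha0 : ∀ j ≤ N, 0 ≤ a j) (haM : ∀ j ≤ N, a j ≤ M)
    (hrec : ∀ j < N, a (j + 1) ≤ K * a j ^ α * M ^ (1 - α)) :
    a N ≤ K ^ (1 / (1 - α)) * a 0 ^ (α ^ N) * M ^ (1 - α ^ N) := by
  have ha₀ : 0 ≤ a 0 := ha0 0 N.zero_le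
  have hKpow := rpow_geom_sum_le_rpow_one_div_one_sub hα.1.le hα.2 hK N
  exact (three_balls_iteration_general hα.1.le (by positivity) hM
    (fun j hj => ha0 j hj.le) hrec).trans (by gcongr)
end
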